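/- arXiv:1808.08290 — 3 statements merged into one kernel-verified Lean document; each statement's English description precedes it below -/
import Mathlib

section
/- Let f₁, f₂ : [0,L] → ℝ be twice continuously differentiable solutions of (p f′)′ = q f on [0,L] whose modified Wronskian p(f₁f₂′ − f₂f₁′) is a nonzero constant. If a, b ∈ [0,L] with a < b are two zeros of f₁, then f₂ has a zero in the open interval (a,b); that is, the zeros of the two linearly independent real solutions alternate. -/
/-- Sturm separation: if `f₁, f₂` are solutions of `(p f′)′ = q f` on `[0,L]` whose
modified Wronskian `p(f₁f₂′ − f₂f₁′)` is a nonzero constant, then between any two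
zeros `a < b` of `f₁` there is a zero of `f₂`. -/
theorem sturm_separation
    (L : ℝ) (hL : 0 < L) (p q : ℝ → ℝ)
    (hp : ContDiffOn ℝ 1 p (Set.Icc 0 L)) (hp_pos : ∀ y ∈ Set.Icc 0 L, 0 < p y)
    (hq : ContinuousOn q (Set.Icc 0 L))
    (f₁ f₂ : ℝ → ℝ)
    (hf₁ : ContDiffOn ℝ 2 f₁ (Set.Icc 0 L)) (hf₂ : ContDiffOn ℝ 2 f₂ (Set.Icc 0 L))
    (hode₁ : ∀ y ∈ Set.Icc 0 L, deriv (fun s => p s * deriv f₁ s) y = q y * f₁ y)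
    (hode₂ : ∀ y ∈ Set.Icc 0 L, deriv (fun s => p s * deriv f₂ s) y = q y * f₂ y)
    (c : ℝ) (hc : c ≠ 0)
    (hW : ∀ y ∈ Set.Icc 0 L,
      p y * (f₁ y * deriv f₂ y - f₂ y * deriv f₁ y) = c)
    (a b : ℝ) (ha : a ∈ Set.Icc 0 L) (hb : b ∈ Set.Icc 0 L) (hab : a < b)
    (hza : f₁ a = 0) (hzb : f₁ b = 0) :
    ∃ z ∈ Set.Ioo a b, f₂ z = 0 := by
  by_contra hno
  push Not at hno
  have hsub : Set.Icc a b ⊆ Set.Icc 0 L := Set.Icc_subset_Icc ha.1 hb.2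
  have hne : ∀ x ∈ Set.Icc a b, f₂ x ≠ 0 := by
    intro x hx h0
    rcases eq_or_lt_of_le hx.1 with h | h
    · subst h
      apply hc
      rw [← hW a ha, hza, h0]
      ring
    rcases eq_or_lt_of_le hx.2 with h' | h'
    · subst h'
      apply hc
      rw [← hW x hb, hzb, h0]
      ring
    · exact hno x ⟨h, h'⟩ h0
  have hcont : ContinuousOn (fun x => f₁ x / f₂ x) (Set.Icc a b) :=
    (hf₁.continuousOn.mono hsub).div (hf₂.continuousOn.mono hsub) hne
  obtain ⟨z, hz, hdz⟩ := exists_deriv_eq_zero hab hcont (by simp [hza, hzb])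
  have hzI := Set.Ioo_subset_Icc_self hz
  have hnhds : Set.Icc 0 L ∈ nhds z :=
    Icc_mem_nhds (lt_of_le_of_lt ha.1 hz.1) (lt_of_lt_of_le hz.2 hb.2)
  have d₁ : DifferentiableAt ℝ f₁ z := (hf₁.contDiffAt hnhds).differentiableAt (by norm_num)
  have d₂ : DifferentiableAt ℝ f₂ z := (hf₂.contDiffAt hnhds).differentiableAt (by norm_num)
  have hd := (d₁.hasDerivAt.fun_div d₂.hasDerivAt (hne z hzI)).deriv
  rw [hdz] at hd
  have h0 : deriv f₁ z * f₂ z - f₁ z * deriv f₂ z = 0 := by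
    rcases div_eq_zero_iff.mp hd.symm with h | h
    · exact h
    · exact absurd h (pow_ne_zero 2 (hne z hzI))
  apply hc
  rw [← hW z (hsub hzI)]
  linear_combination (-p z) * h0
end

section
/- Let s ∈ C¹[0,T] with s(0) = 0 and 0 < s(t) ≤ L for t ∈ (0,T], and let D(s) = {(y,t) ∈ ℝ² : 0 < y < s(t), 0 < t < T}. Then the heat polynomials {h_n}_{n≥0} form a complete system of solutions of the heat equation on D(s): for every solution u of u_{yy} = u_t that is twice continuously differentiable in y and once in t in D(s), every compact subset K of D(s) and every ε > 0, there exist an integer N and real constants a₀, …, a_N such that max_{(y,t) ∈ K} |u(y,t) − Σ_{n=0}^N a_n h_n(y,t)| < ε. -/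
/-- The heat polynomial `h_n(x,t) = ∑_{k=0}^{⌊n/2⌋} c_k^n x^{n−2k} t^k` with
`c_k^n = n! / ((n−2k)! k!)`. -/
noncomputable def heatPoly (n : ℕ) (x t : ℝ) : ℝ :=
  ∑ k ∈ Finset.range (n / 2 + 1),
    ((n.factorial : ℝ) / ((n - 2 * k).factorial * k.factorial)) * x ^ (n - 2 * k) * t ^ k

namespace HeatAux
section
open Real Set Filter Topology MeasureTheory

noncomputable def ER (z s : ℝ) : ℝ := Real.exp (-z ^ 2 / (4 * s)) / √s

theorem hk_fderiv (w wx wt : ℝ × ℝ → ℝ) (cx : Continuous wx) (ct : Continuous wt)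
    (hx : ∀ z : ℝ × ℝ, HasDerivAt (fun y => w (y, z.2)) (wx z) z.1)
    (ht : ∀ z : ℝ × ℝ, HasDerivAt (fun y => w (z.1, y)) (wt z) z.2)
    (x t s r : ℝ) :
    HasDerivAt (fun s => w (x - s * r, t - s ^ 2))
      (-r * wx (x - s * r, t - s ^ 2) - 2 * s * wt (x - s * r, t - s ^ 2)) s := by
  have := hasStrictFDerivAt_uncurry_coprod (𝕜 := ℝ) (u := (x - s * r, t - s ^ 2))
    (f := fun a b => w (a, b)) (f₁ := fun a b => ContinuousLinearMap.toSpanSingleton ℝ (wx (a, b)))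
    (f₂ := fun a b => ContinuousLinearMap.toSpanSingleton ℝ (wt (a, b)))
    (Eventually.of_forall fun v => (hx v).hasFDerivAt)
    (Eventually.of_forall fun v => (ht v).hasFDerivAt)
    (by
      have : Continuous fun v : ℝ × ℝ => ContinuousLinearMap.toSpanSingleton ℝ (wx v) :=
        (ContinuousLinearMap.toSpanSingletonCLE (𝕜 := ℝ) (E := ℝ)).continuous.comp cx
      exact this.continuousAt)
    (by
      have : Continuous fun v : ℝ × ℝ => ContinuousLinearMap.toSpanSingleton ℝ (wt v) :=
        (ContinuousLinearMap.toSpanSingletonCLE (𝕜 := ℝ) (E := ℝ)).continuous.comp ct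
      exact this.continuousAt)
  have h1 : HasDerivAt (fun s : ℝ => (x - s * r, t - s ^ 2)) (-r, - (2 * s)) s := by
    apply HasDerivAt.prodMk
    · simpa using ((hasDerivAt_id s).mul_const r).const_sub x
    · simpa using ((hasDerivAt_id s).pow 2).const_sub t
  have h2 := this.hasFDerivAt.comp_hasDerivAt s h1
  refine h2.congr_deriv ?_
  simp [Function.HasUncurry.uncurry]
  ring

theorem gauss_int : Integrable (fun r : ℝ => Real.exp (-r ^ 2 / 4)) := by
  have := integrable_exp_neg_mul_sq (b := 1 / 4) (by norm_num)
  refine this.congr (Eventually.of_forall fun r => ?_)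
  simp; ring

theorem gauss_int1 : Integrable (fun r : ℝ => |r| * Real.exp (-r ^ 2 / 4)) := by
  have := (integrable_mul_exp_neg_mul_sq (b := 1 / 4) (by norm_num)).norm
  refine this.congr (Eventually.of_forall fun r => ?_)
  simp only [norm_mul, Real.norm_eq_abs, Real.abs_exp]
  congr 2; ring

theorem gauss_val : ∫ r : ℝ, Real.exp (-r ^ 2 / 4) = √(4 * π) := by
  have := integral_gaussian (1 / 4)
  rw [← show π / (1 / 4) = 4 * π by ring, ← this]
  congr 1; ext r; congr 1; ring

theorem bdd_of_cs {w : ℝ × ℝ → ℝ} (c : Continuous w) (h : HasCompactSupport w) :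
    ∃ C, ∀ z, |w z| ≤ C := by
  obtain ⟨C, hC⟩ := h.exists_bound_of_continuous c
  exact ⟨C, hC⟩

theorem J_deriv (w wx wxx wt : ℝ × ℝ → ℝ) (cw : Continuous w) (cx : Continuous wx)
    (cxx : Continuous wxx) (ct : Continuous wt)
    (sw : HasCompactSupport w) (sx : HasCompactSupport wx)
    (sxx : HasCompactSupport wxx) (st : HasCompactSupport wt)
    (hx : ∀ z : ℝ × ℝ, HasDerivAt (fun y => w (y, z.2)) (wx z) z.1)
    (hxx : ∀ z : ℝ × ℝ, HasDerivAt (fun y => wx (y, z.2)) (wxx z) z.1)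
    (ht : ∀ z : ℝ × ℝ, HasDerivAt (fun y => w (z.1, y)) (wt z) z.2)
    (x t s : ℝ) :
    HasDerivAt (fun s => ∫ r : ℝ, Real.exp (-r ^ 2 / 4) * w (x - s * r, t - s ^ 2))
      (-(2 * s) * ∫ r : ℝ, Real.exp (-r ^ 2 / 4) *
        (wt (x - s * r, t - s ^ 2) - wxx (x - s * r, t - s ^ 2))) s := by
  obtain ⟨C, hC⟩ := bdd_of_cs cw sw
  obtain ⟨Cx, hCx⟩ := bdd_of_cs cx sx
  obtain ⟨Cxx, hCxx⟩ := bdd_of_cs cxx sxx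
  obtain ⟨Ct, hCt⟩ := bdd_of_cs ct st
  have intg : ∀ (g : ℝ × ℝ → ℝ) (c : Continuous g) (M : ℝ) (hM : ∀ z, |g z| ≤ M) (s : ℝ),
      Integrable (fun r : ℝ => Real.exp (-r ^ 2 / 4) * g (x - s * r, t - s ^ 2)) := by
    intro g c M hM s
    exact gauss_int.mul_bdd (c := M) (by fun_prop) (Eventually.of_forall fun r => hM _)
  have intg1 : ∀ (g : ℝ × ℝ → ℝ) (c : Continuous g) (M : ℝ) (hM : ∀ z, |g z| ≤ M) (s : ℝ),
      Integrable (fun r : ℝ => Real.exp (-r ^ 2 / 4) * (r * g (x - s * r, t - s ^ 2))) := by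
    intro g c M hM s
    refine Integrable.mono' (gauss_int1.mul_const M) (by fun_prop) (Eventually.of_forall fun r => ?_)
    rw [norm_mul, norm_mul, Real.norm_eq_abs, Real.norm_eq_abs, Real.norm_eq_abs, Real.abs_exp]
    have := hM (x - s * r, t - s ^ 2)
    calc _ = |r| * rexp (-r ^ 2 / 4) * |g (x - s * r, t - s ^ 2)| := by ring
      _ ≤ _ := by gcongr
  have key := (hasDerivAt_integral_of_dominated_loc_of_deriv_le (μ := volume)
    (F := fun s r => Real.exp (-r ^ 2 / 4) * w (x - s * r, t - s ^ 2))
    (F' := fun s r => Real.exp (-r ^ 2 / 4) *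
      (-r * wx (x - s * r, t - s ^ 2) - 2 * s * wt (x - s * r, t - s ^ 2)))
    (x₀ := s) (s := Metric.ball s 1)
    (bound := fun r => |r| * Real.exp (-r ^ 2 / 4) * Cx + Real.exp (-r ^ 2 / 4) * (2 * (|s| + 1) * Ct))
    (Metric.ball_mem_nhds s one_pos)
    (Eventually.of_forall fun s' => (intg w cw C hC s').aestronglyMeasurable)
    (intg w cw C hC s) (by fun_prop) ?_ ?_ ?_).2
  · refine key.congr_deriv ?_; symm
    -- integration by parts
    have h0 : ∫ r : ℝ, (-(r / 2) * Real.exp (-r ^ 2 / 4) * wx (x - s * r, t - s ^ 2)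
        + Real.exp (-r ^ 2 / 4) * (-s * wxx (x - s * r, t - s ^ 2))) = 0 := by
      apply integral_eq_zero_of_hasDerivAt_of_integrable
        (f := fun r => Real.exp (-r ^ 2 / 4) * wx (x - s * r, t - s ^ 2))
      · intro r
        apply HasDerivAt.mul
        · have : HasDerivAt (fun r : ℝ => -r ^ 2 / 4) (-(r / 2)) r := by
            refine (((hasDerivAt_id r).pow 2).neg.div_const 4).congr_deriv ?_
            simp; ring
          refine this.exp.congr_deriv ?_; ring
        · have h1 : HasDerivAt (fun r : ℝ => x - s * r) (-s) r := by
            simpa using ((hasDerivAt_id r).const_mul s).const_sub x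
          have := (hxx (x - s * r, t - s ^ 2)).comp r h1
          refine this.congr_deriv ?_; ring
      · refine Integrable.add ?_ ?_
        · refine ((intg1 wx cx Cx hCx s).const_mul (-1/2)).congr (Eventually.of_forall fun r => ?_)
          simp only []; ring
        · refine ((intg wxx cxx Cxx hCxx s).const_mul (-s)).congr (Eventually.of_forall fun r => ?_)
          simp only []; ring
      · exact intg wx cx Cx hCx s
    have e1 : ∫ r : ℝ, (-(r / 2) * Real.exp (-r ^ 2 / 4) * wx (x - s * r, t - s ^ 2)
        + Real.exp (-r ^ 2 / 4) * (-s * wxx (x - s * r, t - s ^ 2))) =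
        (-1/2) * (∫ r : ℝ, Real.exp (-r ^ 2 / 4) * (r * wx (x - s * r, t - s ^ 2)))
        + (-s) * ∫ r : ℝ, Real.exp (-r ^ 2 / 4) * wxx (x - s * r, t - s ^ 2) := by
      rw [← integral_const_mul, ← integral_const_mul, ← integral_add
        ((intg1 wx cx Cx hCx s).const_mul _) ((intg wxx cxx Cxx hCxx s).const_mul _)]
      congr 1; ext r; ring
    have e2 : ∫ r : ℝ, Real.exp (-r ^ 2 / 4) *
        (wt (x - s * r, t - s ^ 2) - wxx (x - s * r, t - s ^ 2)) =
        (∫ r : ℝ, Real.exp (-r ^ 2 / 4) * wt (x - s * r, t - s ^ 2)) -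
        ∫ r : ℝ, Real.exp (-r ^ 2 / 4) * wxx (x - s * r, t - s ^ 2) := by
      rw [← integral_sub (intg wt ct Ct hCt s) (intg wxx cxx Cxx hCxx s)]
      congr 1; ext r; ring
    have e3 : ∫ r : ℝ, Real.exp (-r ^ 2 / 4) *
      (-r * wx (x - s * r, t - s ^ 2) - 2 * s * wt (x - s * r, t - s ^ 2)) =
        (-1) * (∫ r : ℝ, Real.exp (-r ^ 2 / 4) * (r * wx (x - s * r, t - s ^ 2)))
        + (-(2 * s)) * ∫ r : ℝ, Real.exp (-r ^ 2 / 4) * wt (x - s * r, t - s ^ 2) := by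
      rw [← integral_const_mul, ← integral_const_mul, ← integral_add
        ((intg1 wx cx Cx hCx s).const_mul _) ((intg wt ct Ct hCt s).const_mul _)]
      congr 1; ext r; ring
    rw [e1] at h0
    rw [e2, e3]
    linear_combination -2 * h0
  · refine Eventually.of_forall fun r s' hs' => ?_
    have hs1 : |s'| ≤ |s| + 1 := by
      rw [Metric.mem_ball, Real.dist_eq] at hs'
      have := abs_sub_abs_le_abs_sub s' s
      linarith
    rw [norm_mul, Real.norm_eq_abs, Real.norm_eq_abs, Real.abs_exp]
    have a1 := hCx (x - s' * r, t - s' ^ 2)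
    have a2 := hCt (x - s' * r, t - s' ^ 2)
    have : |-r * wx (x - s' * r, t - s' ^ 2) - 2 * s' * wt (x - s' * r, t - s' ^ 2)|
        ≤ |r| * Cx + 2 * (|s| + 1) * Ct := by
      refine (abs_sub _ _).trans ?_
      rw [abs_mul, abs_mul, abs_mul, abs_neg, abs_two]
      gcongr
    calc _ ≤ rexp (-r ^ 2 / 4) * (|r| * Cx + 2 * (|s| + 1) * Ct) := by gcongr
      _ = _ := by ring
  · exact (gauss_int1.mul_const _).add (gauss_int.mul_const _)
  · refine Eventually.of_forall fun r s' hs' => ?_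
    exact (hk_fderiv w wx wt cx ct hx ht x t s' r).const_mul _

theorem rep (w wx wxx wt : ℝ × ℝ → ℝ) (cw : Continuous w) (cx : Continuous wx)
    (cxx : Continuous wxx) (ct : Continuous wt)
    (sw : HasCompactSupport w) (sx : HasCompactSupport wx)
    (sxx : HasCompactSupport wxx) (st : HasCompactSupport wt)
    (hx : ∀ z : ℝ × ℝ, HasDerivAt (fun y => w (y, z.2)) (wx z) z.1)
    (hxx : ∀ z : ℝ × ℝ, HasDerivAt (fun y => wx (y, z.2)) (wxx z) z.1)
    (ht : ∀ z : ℝ × ℝ, HasDerivAt (fun y => w (z.1, y)) (wt z) z.2)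
    (x t : ℝ)
    (hint : Integrable fun z : ℝ × ℝ => ER (x - z.1) (t - z.2) * (wt z - wxx z)) :
    ∫ z : ℝ × ℝ, ER (x - z.1) (t - z.2) * (wt z - wxx z) = √(4 * π) * w (x, t) := by
  -- bounded support
  obtain ⟨S, hS0, hS⟩ : ∃ S : ℝ, 0 < S ∧ ∀ s, S ≤ s → ∀ y, w (y, t - s ^ 2) = 0 ∧ wt (y, t - s ^ 2) = 0
      ∧ wxx (y, t - s ^ 2) = 0 := by
    have b : Bornology.IsBounded (tsupport w ∪ tsupport wt ∪ tsupport wxx) :=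
      ((sw.isCompact.union st.isCompact).union sxx.isCompact).isBounded
    obtain ⟨R, hR⟩ := b.exists_norm_le
    refine ⟨|R| + |t| + 1, by positivity, fun s hs y => ?_⟩
    have : (y, t - s ^ 2) ∉ (tsupport w ∪ tsupport wt ∪ tsupport wxx) := by
      intro h
      have h1 := hR _ h
      have h2 : ‖t - s ^ 2‖ ≤ R := (norm_snd_le (y, t - s ^ 2)).trans h1
      rw [Real.norm_eq_abs, abs_le] at h2
      have := le_abs_self R
      have := le_abs_self t
      have := abs_nonneg R
      have := abs_nonneg t
      nlinarith
    simp only [mem_union, not_or] at this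
    exact ⟨image_eq_zero_of_notMem_tsupport this.1.1, image_eq_zero_of_notMem_tsupport this.1.2,
      image_eq_zero_of_notMem_tsupport this.2⟩
  set f : ℝ × ℝ → ℝ := fun z => wt z - wxx z with hf
  have cf : Continuous f := ct.sub cxx
  obtain ⟨Cf, hCf⟩ : ∃ C, ∀ z, |f z| ≤ C := bdd_of_cs cf (st.sub sxx)
  set J := fun s => ∫ r : ℝ, Real.exp (-r ^ 2 / 4) * w (x - s * r, t - s ^ 2) with hJ
  set I := fun s => ∫ r : ℝ, Real.exp (-r ^ 2 / 4) * f (x - s * r, t - s ^ 2) with hI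
  have hd : ∀ s, HasDerivAt J (-(2 * s) * I s) s := fun s =>
    J_deriv w wx wxx wt cw cx cxx ct sw sx sxx st hx hxx ht x t s
  have cI : Continuous I := by
    refine continuous_of_dominated (bound := fun r => Real.exp (-r ^ 2 / 4) * Cf) ?_ ?_ ?_ ?_
    · intro s; fun_prop
    · intro s; refine Eventually.of_forall fun r => ?_
      rw [norm_mul, Real.norm_eq_abs, Real.norm_eq_abs, Real.abs_exp]
      gcongr; exact hCf _
    · exact gauss_int.mul_const _
    · refine Eventually.of_forall fun r => ?_
      fun_prop
  have ftc : ∫ s in (0:ℝ)..S, -(2 * s) * I s = J S - J 0 :=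
    intervalIntegral.integral_eq_sub_of_hasDerivAt (fun s _ => hd s)
      (Continuous.intervalIntegrable (by fun_prop) _ _)
  have JS : J S = 0 := by
    simp only [hJ]
    rw [integral_congr_ae (g := fun _ => 0) (Eventually.of_forall fun r => by
      simp [(hS S le_rfl _).1])]
    simp
  have J0 : J 0 = √(4 * π) * w (x, t) := by
    simp only [hJ]
    rw [← gauss_val, ← integral_mul_const]
    simp
  rw [JS, J0] at ftc
  -- rewrite as integral on Ioi 0
  have e1 : ∫ s in Ioi (0:ℝ), (2 * s) * I s = √(4 * π) * w (x, t) := by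
    have : ∫ s in Ioi (0:ℝ), (2 * s) * I s = ∫ s in Ioc (0:ℝ) S, (2 * s) * I s := by
      apply setIntegral_eq_of_subset_of_forall_sdiff_eq_zero measurableSet_Ioi Ioc_subset_Ioi_self
      intro s hs
      have hs' : S ≤ s := by
        by_contra h
        exact hs.2 ⟨hs.1, (not_le.1 h).le⟩
      have : I s = 0 := by
        simp only [hI]
        rw [integral_congr_ae (g := fun _ => 0) (Eventually.of_forall fun r => by
          simp [hf, (hS s hs' _).2.1, (hS s hs' _).2.2])]
        simp
      rw [this, mul_zero]
    rw [this, ← intervalIntegral.integral_of_le hS0.le]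
    have h2 : ∫ s in (0:ℝ)..S, -(2 * s) * I s = - ∫ s in (0:ℝ)..S, (2 * s) * I s := by
      rw [← intervalIntegral.integral_neg]; congr 1; ext s; ring
    linarith
  have e2 : ∫ y in Ioi (0:ℝ), (∫ η : ℝ, ER (x - η) y * f (η, t - y)) =
      ∫ s in Ioi (0:ℝ), (2 * s) * I s := by
    rw [← integral_comp_rpow_Ioi_of_pos (p := 2) (by norm_num)]
    apply setIntegral_congr_fun measurableSet_Ioi
    intro s hs
    have hs : 0 < s := hs
    simp only [smul_eq_mul]
    norm_num
    left
    have : ∫ r : ℝ, Real.exp (-r ^ 2 / 4) * f (x - s * r, t - s ^ 2)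
        = |s⁻¹| * ∫ η : ℝ, Real.exp (-(η / s) ^ 2 / 4) * f (x - η, t - s ^ 2) := by
      rw [← smul_eq_mul |s⁻¹|, ← Measure.integral_comp_mul_left]
      congr 1; ext r
      rw [mul_div_cancel_left₀ _ hs.ne']
    rw [hI]; simp only []
    rw [this, ← integral_sub_left_eq_self (fun η => ER (x - η) (s ^ 2) * f (η, t - s ^ 2)) _ x,
      ← integral_const_mul]
    congr 1; ext η
    rw [ER, Real.sqrt_sq hs.le, abs_of_pos (by positivity)]
    have : -η ^ 2 / (4 * s ^ 2) = -(η / s) ^ 2 / 4 := by field_simp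
    rw [sub_sub_cancel, this]
    field_simp
  have e3 : ∫ z : ℝ × ℝ, ER (x - z.1) (t - z.2) * f z =
      ∫ τ : ℝ, ∫ η : ℝ, ER (x - η) (t - τ) * f (η, τ) := by
    rw [Measure.volume_eq_prod] at hint ⊢
    exact integral_prod_symm _ hint
  have e4 : ∫ τ : ℝ, ∫ η : ℝ, ER (x - η) (t - τ) * f (η, τ) =
      ∫ y : ℝ, ∫ η : ℝ, ER (x - η) y * f (η, t - y) := by
    rw [← integral_sub_left_eq_self _ _ t]
    simp
  have e5 : ∫ y : ℝ, ∫ η : ℝ, ER (x - η) y * f (η, t - y) =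
      ∫ y in Ioi (0:ℝ), (∫ η : ℝ, ER (x - η) y * f (η, t - y)) := by
    symm
    apply setIntegral_eq_integral_of_forall_compl_eq_zero
    intro y hy
    have : √y = 0 := Real.sqrt_eq_zero_of_nonpos (not_lt.1 hy)
    simp [ER, this]
  rw [e3, e4, e5, e2, e1]

noncomputable def Psi (k z : ℝ) : ℝ := ∫ r in Ioi (0:ℝ), Real.exp (-(k ^ 2) * r ^ 2 - z ^ 2 / (4 * r ^ 2))

theorem subst_inv (g : ℝ → ℝ) (c : ℝ) (hc : 0 < c) :
    ∫ r in Ioi (0:ℝ), g r = ∫ r in Ioi (0:ℝ), c / r ^ 2 * g (c / r) := by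
  have h1 := integral_comp_mul_left_Ioi' g 0 hc
  rw [mul_zero] at h1
  rw [← h1, ← integral_comp_rpow_Ioi (fun x => g (c * x)) (p := -1) (by norm_num), smul_eq_mul,
    ← integral_const_mul]
  apply setIntegral_congr_fun measurableSet_Ioi
  intro r hr
  have hr : 0 < r := hr
  simp only [smul_eq_mul]
  rw [Real.rpow_neg_one, show (-1 - 1 : ℝ) = -(2:ℕ) by norm_num, Real.rpow_neg hr.le,
    Real.rpow_natCast]
  simp
  field_simp

theorem Psi_deriv (k z : ℝ) (hk : 0 < k) (hz : 0 < z) : HasDerivAt (Psi k) (-k * Psi k z) z := by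
  have gi : IntegrableOn (fun r : ℝ => Real.exp (-(k ^ 2) * r ^ 2)) (Ioi 0) :=
    (integrable_exp_neg_mul_sq (by positivity)).integrableOn
  have key := (hasDerivAt_integral_of_dominated_loc_of_deriv_le (μ := volume.restrict (Ioi (0:ℝ)))
    (F := fun z r => Real.exp (-(k ^ 2) * r ^ 2 - z ^ 2 / (4 * r ^ 2)))
    (F' := fun z r => Real.exp (-(k ^ 2) * r ^ 2 - z ^ 2 / (4 * r ^ 2)) * (- (2 * z / (4 * r ^ 2))))
    (x₀ := z) (s := Ioi (z / 2))
    (bound := fun r => Real.exp (-(k ^ 2) * r ^ 2) * (4 / z))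
    (Ioi_mem_nhds (by linarith))
    (Eventually.of_forall fun z' => by fun_prop)
    ?_ (by fun_prop) ?_ ?_ ?_).2
  · refine key.congr_deriv ?_
    rw [Psi, subst_inv _ (z / (2 * k)) (by positivity), ← integral_const_mul]
    apply setIntegral_congr_fun measurableSet_Ioi
    intro r hr
    have hr : 0 < r := hr
    have : -(k ^ 2) * (z / (2 * k) / r) ^ 2 - z ^ 2 / (4 * (z / (2 * k) / r) ^ 2) =
      -(k ^ 2) * r ^ 2 - z ^ 2 / (4 * r ^ 2) := by field_simp; ring
    simp only [this]
    field_simp; ring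
  · refine Integrable.mono' gi (by fun_prop) (Eventually.of_forall fun r => ?_)
    rw [Real.norm_eq_abs, Real.abs_exp]
    apply Real.exp_le_exp.2
    have : 0 ≤ z ^ 2 / (4 * r ^ 2) := by positivity
    linarith
  · filter_upwards [ae_restrict_mem measurableSet_Ioi] with r hr z' hz'
    have hr : 0 < r := hr
    have hz' : z / 2 < z' := hz'
    have hz0 : 0 < z' := by linarith
    rw [norm_mul, Real.norm_eq_abs, Real.norm_eq_abs, Real.abs_exp, abs_neg, abs_of_pos (by positivity),
      sub_eq_add_neg, Real.exp_add, mul_assoc]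
    gcongr
    set y := z' ^ 2 / (4 * r ^ 2) with hy
    have h1 : 2 * z' / (4 * r ^ 2) = y * (2 / z') := by rw [hy]; field_simp
    have h2 : Real.exp (-y) * y ≤ 1 := by
      rw [Real.exp_neg, inv_mul_le_iff₀ (Real.exp_pos _), mul_one]
      linarith [Real.add_one_le_exp y]
    calc _ = (Real.exp (-y) * y) * (2 / z') := by rw [h1]; ring
      _ ≤ 1 * (2 / z') := by gcongr
      _ ≤ 4 / z := by
        rw [one_mul, div_le_div_iff₀ hz0 hz]; linarith
  · exact gi.mul_const _
  · refine Eventually.of_forall fun r z' _ => ?_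
    have : HasDerivAt (fun z : ℝ => -(k ^ 2) * r ^ 2 - z ^ 2 / (4 * r ^ 2)) (-(2 * z' / (4 * r ^ 2))) z' := by
      refine ((((hasDerivAt_id z').pow 2).div_const (4 * r ^ 2)).const_sub _).congr_deriv ?_
      simp
    exact this.exp

theorem Psi_eq (k : ℝ) (hk : 0 < k) : ∃ A, ∀ z, 0 < z → Psi k z = A * Real.exp (-k * z) := by
  have hd : ∀ z ∈ Ioi (0:ℝ), HasDerivAt (fun z => Real.exp (k * z) * Psi k z) 0 z := by
    intro z hz
    have h1 : HasDerivAt (fun z => Real.exp (k * z)) (Real.exp (k * z) * k) z := by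
      have : HasDerivAt (fun z => k * z) k z := by simpa using (hasDerivAt_id z).const_mul k
      exact this.exp
    refine (h1.mul (Psi_deriv k z hk hz)).congr_deriv ?_
    ring
  refine ⟨Real.exp (k * 1) * Psi k 1, fun z hz => ?_⟩
  have := isOpen_Ioi.is_const_of_deriv_eq_zero (isPreconnected_Ioi (a := (0:ℝ)))
    (fun z hz => (hd z hz).differentiableAt.differentiableWithinAt)
    (fun z hz => (hd z hz).deriv) (x := 1) (y := z) (by simp) hz
  rw [this, mul_right_comm, ← Real.exp_add]
  simp

theorem lapl (k : ℝ) (hk : 0 < k) : ∃ A : ℝ, ∀ z, 0 < z → ∀ t,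
    ∫ τ : ℝ, Real.exp (k ^ 2 * τ) * ER z (t - τ) = A * Real.exp (k ^ 2 * t - k * z) := by
  obtain ⟨A, hA⟩ := Psi_eq k hk
  refine ⟨2 * A, fun z hz t => ?_⟩
  rw [← integral_sub_left_eq_self _ _ t]
  have e1 : ∫ y : ℝ, Real.exp (k ^ 2 * (t - y)) * ER z (t - (t - y)) =
      ∫ y in Ioi (0:ℝ), Real.exp (k ^ 2 * (t - y)) * ER z y := by
    symm
    simp only [sub_sub_cancel]
    apply setIntegral_eq_integral_of_forall_compl_eq_zero
    intro y hy
    have : √y = 0 := Real.sqrt_eq_zero_of_nonpos (not_lt.1 hy)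
    simp [ER, this]
  rw [e1, ← integral_comp_rpow_Ioi_of_pos (p := 2) (by norm_num)]
  have e2 : 2 * A * Real.exp (k ^ 2 * t - k * z) = (2 * Real.exp (k ^ 2 * t)) * Psi k z := by
    rw [hA z hz, sub_eq_add_neg, Real.exp_add, neg_mul]; ring
  rw [e2, Psi, ← integral_const_mul]
  apply setIntegral_congr_fun measurableSet_Ioi
  intro r hr
  have hr : 0 < r := hr
  simp only [smul_eq_mul, ER]
  norm_num
  rw [Real.sqrt_sq hr.le, sub_eq_add_neg (-(k ^ 2 * r ^ 2)), Real.exp_add, mul_sub, sub_eq_add_neg, Real.exp_add, neg_div]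
  field_simp

theorem int_exp_bdd {F : Type*} [NormedAddCommGroup F] [NormedSpace ℝ F] (v : ℝ → F)
    (cv : Continuous v) (B : ℝ) (hB : ∀ τ, ‖v τ‖ ≤ B)
    (Q : ℝ) (hQ : ∀ τ, Q ≤ τ → v τ = 0) (a : ℝ) (ha : 0 < a) :
    Integrable (fun τ => Real.exp (a * τ) • v τ) := by
  have h1 : IntegrableOn (fun τ => Real.exp (a * τ) * B) (Iic Q) :=
    (integrableOn_exp_mul_Iic ha Q).mul_const B
  have h2 : IntegrableOn (fun τ => Real.exp (a * τ) • v τ) (Iic Q) := by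
    refine Integrable.mono' h1 (Continuous.aestronglyMeasurable (by fun_prop)) (Eventually.of_forall fun τ => ?_)
    rw [norm_smul, Real.norm_eq_abs, Real.abs_exp]
    gcongr
    exact hB τ
  rw [← integrableOn_univ]
  refine h2.of_forall_sdiff_eq_zero MeasurableSet.univ ?_
  intro τ hτ
  rw [hQ τ (by simpa using (not_le.1 hτ.2).le), smul_zero]

theorem lap_uniq (v : ℝ → ℝ) (cv : Continuous v) (B : ℝ) (hB : ∀ τ, |v τ| ≤ B)
    (Q : ℝ) (hQ : ∀ τ, Q ≤ τ → v τ = 0)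
    (hm : ∀ n : ℕ, ∫ τ, Real.exp (((n : ℝ) + 2) * τ) * v τ = 0) : ∀ τ, v τ = 0 := by
  have hi : ∀ a : ℝ, 0 < a → Integrable (fun τ => Real.exp (a * τ) * v τ) := fun a ha => by
    simpa using int_exp_bdd v cv B hB Q hQ a ha
  have ch : ContinuousOn (fun y => y * v (Real.log y)) (Icc 0 (Real.exp Q)) := by
    intro y hy
    apply ContinuousAt.continuousWithinAt
    rcases eq_or_ne y 0 with rfl | h
    · rw [ContinuousAt]
      simp only [zero_mul]
      refine squeeze_zero_norm (a := fun y => |y| * B) (fun y => ?_) ?_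
      · rw [norm_mul, Real.norm_eq_abs, Real.norm_eq_abs]
        gcongr; exact hB _
      · have : Continuous fun y : ℝ => |y| * B := by fun_prop
        simpa using this.tendsto 0
    · exact continuousAt_id.mul (cv.continuousAt.comp (Real.continuousAt_log h))
  have hpoly : ∀ p : Polynomial ℝ,
      Integrable (fun τ => Real.exp (2 * τ) * v τ * p.eval (Real.exp τ)) ∧
      ∫ τ, Real.exp (2 * τ) * v τ * p.eval (Real.exp τ) = 0 := by
    intro p
    have e : (fun τ => Real.exp (2 * τ) * v τ * p.eval (Real.exp τ)) =
      fun τ => ∑ i ∈ Finset.range (p.natDegree + 1), p.coeff i * (Real.exp (((i : ℝ) + 2) * τ) * v τ) := by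
      ext τ
      rw [Polynomial.eval_eq_sum_range, Finset.mul_sum]
      refine Finset.sum_congr rfl fun i _ => ?_
      rw [add_mul, Real.exp_add, Real.exp_nat_mul]; ring
    have hii : ∀ i ∈ Finset.range (p.natDegree + 1),
      Integrable (fun τ => p.coeff i * (Real.exp (((i : ℝ) + 2) * τ) * v τ)) :=
      fun i _ => (hi _ (by positivity)).const_mul _
    rw [e]
    refine ⟨integrable_finsetSum _ hii, ?_⟩
    rw [integral_finsetSum _ hii]
    refine Finset.sum_eq_zero fun i _ => ?_
    rw [integral_const_mul, hm, mul_zero]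
  set M := ∫ τ, |Real.exp (2 * τ) * v τ| with hM
  have hMi : Integrable fun τ => |Real.exp (2 * τ) * v τ| := (hi 2 (by norm_num)).norm
  have hM0 : 0 ≤ M := integral_nonneg fun τ => abs_nonneg _
  have h3i : Integrable (fun τ => Real.exp (3 * τ) * v τ ^ 2) := by
    have := (hi 3 (by norm_num)).mul_bdd (c := B) cv.aestronglyMeasurable (Eventually.of_forall hB)
    refine this.congr (Eventually.of_forall fun τ => ?_)
    simp only []; ring
  have hle : ∀ ε > 0, ∫ τ, Real.exp (3 * τ) * v τ ^ 2 ≤ M * ε := by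
    intro ε hε
    obtain ⟨p, hp⟩ := exists_polynomial_near_of_continuousOn _ _ _ ch ε hε
    have e : ∫ τ, Real.exp (3 * τ) * v τ ^ 2 =
        ∫ τ, (Real.exp (3 * τ) * v τ ^ 2 - Real.exp (2 * τ) * v τ * p.eval (Real.exp τ)) := by
      rw [integral_sub h3i (hpoly p).1, (hpoly p).2, sub_zero]
    rw [e, hM, ← integral_mul_const]
    refine integral_mono (h3i.sub (hpoly p).1) (hMi.mul_const _) fun τ => ?_
    simp only []
    rcases le_total Q τ with h | h
    · simp [hQ τ h]
    · have := hp (Real.exp τ) ⟨(Real.exp_pos _).le, Real.exp_le_exp.2 h⟩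
      rw [Real.log_exp] at this
      have e3 : Real.exp (3 * τ) = Real.exp (2 * τ) * Real.exp τ := by
        rw [← Real.exp_add]; ring_nf
      calc _ = Real.exp (2 * τ) * v τ * (Real.exp τ * v τ - p.eval (Real.exp τ)) := by
            rw [e3]; ring
        _ ≤ |Real.exp (2 * τ) * v τ| * |Real.exp τ * v τ - p.eval (Real.exp τ)| := by
            rw [← abs_mul]; exact le_abs_self _
        _ ≤ _ := by
            gcongr
            rw [abs_sub_comm]; exact this.le
  have hzero : ∫ τ, Real.exp (3 * τ) * v τ ^ 2 = 0 := by
    apply le_antisymm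
    · refine le_of_forall_pos_le_add fun ε hε => ?_
      have := hle (ε / (M + 1)) (by positivity)
      refine this.trans ?_
      rw [zero_add, mul_div_assoc', div_le_iff₀ (by positivity)]
      nlinarith
    · exact integral_nonneg fun τ => by positivity
  rw [integral_eq_zero_iff_of_nonneg (fun τ => by positivity) h3i] at hzero
  have := Continuous.ae_eq_iff_eq volume (by fun_prop) continuous_const |>.1 hzero
  intro τ
  have h2 : Real.exp (3 * τ) * v τ ^ 2 = 0 := congrFun this τ
  simpa [Real.exp_ne_zero] using h2

theorem lap_uniqC (v : ℝ → ℂ) (cv : Continuous v) (B : ℝ) (hB : ∀ τ, ‖v τ‖ ≤ B)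
    (Q : ℝ) (hQ : ∀ τ, Q ≤ τ → v τ = 0)
    (hm : ∀ n : ℕ, ∫ τ, Real.exp (((n : ℝ) + 2) * τ) • v τ = 0) : ∀ τ, v τ = 0 := by
  have hi : ∀ n : ℕ, Integrable (fun τ => Real.exp (((n : ℝ) + 2) * τ) • v τ) := fun n =>
    int_exp_bdd v cv B hB Q hQ _ (by positivity)
  have hre := lap_uniq (fun τ => (v τ).re) (by fun_prop) B
    (fun τ => (Complex.abs_re_le_norm _).trans (hB τ)) Q (fun τ h => by simp [hQ τ h]) (fun n => by
      have := Complex.reCLM.integral_comp_comm (hi n)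
      rw [hm n, map_zero] at this
      simpa only [Complex.reCLM_apply, Complex.smul_re, smul_eq_mul] using this)
  have him := lap_uniq (fun τ => (v τ).im) (by fun_prop) B
    (fun τ => (Complex.abs_im_le_norm _).trans (hB τ)) Q (fun τ h => by simp [hQ τ h]) (fun n => by
      have := Complex.imCLM.integral_comp_comm (hi n)
      rw [hm n, map_zero] at this
      simpa only [Complex.imCLM_apply, Complex.smul_im, smul_eq_mul] using this)
  exact fun τ => Complex.ext (hre τ) (him τ)

noncomputable def EC (z : ℂ) (s : ℝ) : ℂ := Complex.exp (-z ^ 2 / (4 * s)) / ((√s : ℝ) : ℂ)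

theorem EC_ofReal (z s : ℝ) : EC z s = (ER z s : ℂ) := by
  simp [EC, ER]

theorem EC_nonpos (z : ℂ) (s : ℝ) (hs : s ≤ 0) : EC z s = 0 := by
  simp [EC, Real.sqrt_eq_zero_of_nonpos hs]

theorem EC_norm (z : ℂ) (s : ℝ) : ‖EC z s‖ = Real.exp (-(z ^ 2).re / (4 * s)) / √s := by
  rw [EC, norm_div, Complex.norm_exp, Complex.norm_real, Real.norm_eq_abs, abs_of_nonneg (Real.sqrt_nonneg s)]
  congr 2
  have : -z ^ 2 / (4 * (s : ℂ)) = ((4 * s : ℝ)⁻¹ : ℝ) * (-z ^ 2) := by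
    push_cast; rw [div_eq_inv_mul]
  rw [this, Complex.re_ofReal_mul, Complex.neg_re, div_eq_inv_mul]

theorem EC_bound (z : ℂ) (s c : ℝ) (hc : 0 < c) (hz : c ≤ (z ^ 2).re) : ‖EC z s‖ ≤ 4 * √s / c := by
  rcases le_or_gt s 0 with hs | hs
  · rw [EC_nonpos z s hs, norm_zero]; positivity
  · rw [EC_norm, div_le_iff₀ (Real.sqrt_pos.2 hs)]
    have h1 : Real.exp (-(z ^ 2).re / (4 * s)) ≤ Real.exp (-(c / (4 * s))) := by
      apply Real.exp_le_exp.2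
      rw [neg_div]; gcongr
    refine h1.trans ?_
    rw [Real.exp_neg]
    have h2 : c / (4 * s) ≤ Real.exp (c / (4 * s)) := by linarith [Real.add_one_le_exp (c / (4 * s))]
    calc (Real.exp (c / (4 * s)))⁻¹ ≤ (c / (4 * s))⁻¹ := by gcongr
      _ = 4 * (√s * √s) / c := by rw [Real.mul_self_sqrt hs.le, inv_div]
      _ = _ := by ring

theorem EC_continuousAt (z : ℂ) (s : ℝ) (h : s = 0 → 0 < (z ^ 2).re) :
    ContinuousAt (fun a : ℂ × ℝ => EC a.1 a.2) (z, s) := by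
  rcases lt_trichotomy s 0 with hs | hs | hs
  · have : (fun a : ℂ × ℝ => EC a.1 a.2) =ᶠ[𝓝 (z, s)] fun _ => 0 := by
      filter_upwards [(isOpen_Iio.preimage continuous_snd).mem_nhds (show (z, s).2 < 0 from hs)] with a ha
      exact EC_nonpos _ _ (le_of_lt ha)
    exact continuousAt_const.congr this.symm
  · have hz := h hs
    subst hs
    rw [ContinuousAt, EC_nonpos z 0 le_rfl]
    have hc : Continuous fun a : ℂ × ℝ => (a.1 ^ 2).re := by fun_prop
    have ev : ∀ᶠ a : ℂ × ℝ in 𝓝 (z, 0), ‖EC a.1 a.2‖ ≤ 4 * √a.2 / ((z ^ 2).re / 2) := by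
      filter_upwards [hc.continuousAt.eventually (lt_mem_nhds (show (z ^ 2).re / 2 < (z ^ 2).re by linarith))] with a ha
      exact EC_bound _ _ _ (by positivity) ha.le
    refine squeeze_zero_norm' ev ?_
    have : Continuous fun a : ℂ × ℝ => 4 * √a.2 / ((z ^ 2).re / 2) := by fun_prop
    simpa using this.tendsto (z, 0)
  · unfold EC
    refine ContinuousAt.div ?_ (by fun_prop) ?_
    · refine ContinuousAt.cexp (ContinuousAt.div (by fun_prop) (by fun_prop) ?_)
      simp [hs.ne']
    · simp [Real.sqrt_ne_zero'.2 hs]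

theorem EC_comp_at {Z : Type*} [TopologicalSpace Z] (f : Z → ℂ) (g : Z → ℝ)
    (hf : Continuous f) (hg : Continuous g) (h : ∀ z, g z = 0 → 0 < ((f z) ^ 2).re) (z : Z):
   ContinuousAt (fun a : ℂ × ℝ => EC a.1 a.2) (f z, g z)  := by
  exact EC_continuousAt (f z) (g z) (h z)

theorem comp_cont_gen (E : ℂ → ℝ → ℂ) {Z : Type*} [TopologicalSpace Z] (f : Z → ℂ) (g : Z → ℝ)
    (hf : Continuous f) (hg : Continuous g) 
  (h : ∀ z, ContinuousAt (fun a : ℂ × ℝ => E a.1 a.2) (f z, g z)) :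
    Continuous (fun z => E (f z) (g z)) := by
  rw [continuous_iff_continuousAt]
  intro z
  have h1 := h z
  have h2 : Tendsto (fun z => (f z, g z)) (𝓝 z) (𝓝 (f z, g z)) := (hf.prodMk hg).tendsto z
  exact Tendsto.comp h1 h2
theorem EC_comp_cont {Z : Type*} [TopologicalSpace Z] (f : Z → ℂ) (g : Z → ℝ)
    (hf : Continuous f) (hg : Continuous g) (h : ∀ z, g z = 0 → 0 < ((f z) ^ 2).re) :
    Continuous (fun z => EC (f z) (g z)) := comp_cont_gen EC f g hf hg (fun z => EC_comp_at f g hf hg h z)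

theorem EC_diff (s : ℝ) : Differentiable ℂ (fun z => EC z s) := by
  unfold EC
  intro z
  apply DifferentiableAt.div_const
  apply DifferentiableAt.cexp
  apply DifferentiableAt.div_const
  fun_prop

section
variable {X : Type*} [TopologicalSpace X] [CompactSpace X]

def Good (p q : C(X, ℝ)) (η : ℂ) (τ : ℝ) : Prop :=
  ∀ x, q x = τ → 0 < (((p x : ℂ) - η) ^ 2).re

open Classical in
noncomputable def mkC (f : X → ℂ) : C(X, ℂ) := if h : Continuous f then ⟨f, h⟩ else 0

noncomputable def FK (p q : C(X, ℝ)) (η : ℂ) (τ : ℝ) : C(X, ℂ) :=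
  mkC (fun x => EC ((p x : ℂ) - η) (q x - τ))

theorem FK_cont_aux {Y : Type*} [TopologicalSpace Y] (p q : C(X, ℝ)) (a : Y → ℂ) (b : Y → ℝ)
    (ha : Continuous a) (hb : Continuous b) (hg : ∀ y, Good p q (a y) (b y)) :
    Continuous (fun yx : Y × X => EC ((p yx.2 : ℂ) - a yx.1) (q yx.2 - b yx.1)) := by
  have hp1 : Continuous fun yx : Y × X => (p yx.2 : ℂ) :=
    Complex.continuous_ofReal.comp (p.continuous.comp continuous_snd)
  have hp : Continuous fun yx : Y × X => (p yx.2 : ℂ) - a yx.1 :=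
    hp1.sub (ha.comp continuous_fst)
  have hq1 : Continuous fun yx : Y × X => q yx.2 := q.continuous.comp continuous_snd
  have hq : Continuous fun yx : Y × X => q yx.2 - b yx.1 :=
    hq1.sub (hb.comp continuous_fst)
  exact EC_comp_cont _ _ hp hq (fun yx h => hg yx.1 yx.2 (sub_eq_zero.1 h))

theorem FK_apply (p q : C(X, ℝ)) (η : ℂ) (τ : ℝ) (hg : Good p q η τ) (x : X) :
    FK p q η τ x = EC ((p x : ℂ) - η) (q x - τ) := by
  have : Continuous (fun x => EC ((p x : ℂ) - η) (q x - τ)) :=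
    (FK_cont_aux (Y := Unit) p q (fun _ => η) (fun _ => τ) continuous_const continuous_const
      (fun _ => hg)).comp (f := fun x : X => ((), x)) (by fun_prop)
  rw [FK, mkC, dif_pos this]
  rfl

theorem FK_continuous {Y : Type*} [TopologicalSpace Y] (p q : C(X, ℝ)) (a : Y → ℂ) (b : Y → ℝ)
    (ha : Continuous a) (hb : Continuous b) (hg : ∀ y, Good p q (a y) (b y)) :
    Continuous (fun y => FK p q (a y) (b y)) := by
  apply ContinuousMap.continuous_of_continuous_uncurry
  have := FK_cont_aux p q a b ha hb hg
  convert this using 1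
  ext ⟨y, x⟩
  exact FK_apply p q _ _ (hg y) x

theorem hol (F : ℂ → C(X, ℂ)) (Ω : Set ℂ) (hΩ : IsOpen Ω) (cF : ContinuousOn F Ω)
    (hF : ∀ x, DifferentiableOn ℂ (fun η => F η x) Ω) : DifferentiableOn ℂ F Ω := by
  intro c hc
  obtain ⟨R, hR, hball⟩ := Metric.nhds_basis_closedBall.mem_iff.1 (hΩ.mem_nhds hc)
  lift R to NNReal using hR.le
  have hci : CircleIntegrable F c R :=
    ContinuousOn.circleIntegrable R.2 (cF.mono (Metric.sphere_subset_closedBall.trans hball))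
  have h := hasFPowerSeriesOn_cauchy_integral hci (by exact_mod_cast hR)
  have h2 : DifferentiableAt ℂ (fun w => (2 * π * Complex.I : ℂ)⁻¹ • ∮ z in C(c, R), (z - w)⁻¹ • F z) c :=
    h.analyticAt.differentiableAt
  refine (h2.congr_of_eventuallyEq ?_).differentiableWithinAt
  filter_upwards [Metric.ball_mem_nhds c hR] with w hw
  ext x
  have h3 := DifferentiableOn.circleIntegral_sub_inv_smul ((hF x).mono hball) hw
  have hci2 : CircleIntegrable (fun z => (z - w)⁻¹ • F z) c R := by
    refine ContinuousOn.circleIntegrable R.2 ?_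
    have h0 : ContinuousOn (fun z : ℂ => z - w) (Metric.sphere c R) := by fun_prop
    refine ContinuousOn.smul (h0.inv₀ ?_)
      (cF.mono (Metric.sphere_subset_closedBall.trans hball))
    intro z hz h0
    rw [sub_eq_zero] at h0
    subst h0
    rw [Metric.mem_sphere] at hz
    rw [Metric.mem_ball] at hw
    linarith
  have h4 : (∮ z in C(c, R), (z - w)⁻¹ • F z) x = ∮ z in C(c, R), (z - w)⁻¹ • F z x := by
    have := ((ContinuousMap.evalCLM ℂ x : C(X, ℂ) →L[ℂ] ℂ)).intervalIntegral_comp_comm hci2.out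
    simp only [circleIntegral]
    rw [← ContinuousMap.evalCLM_apply (M := ℂ) ℂ x, ← this]
    rfl
  rw [ContinuousMap.smul_apply, h4, h3, smul_smul, inv_mul_cancel₀ (by simp [Real.pi_ne_zero]), one_smul]

noncomputable def expo (p q : C(X, ℝ)) (k : ℝ) : C(X, ℂ) :=
  ⟨fun x => ((Real.exp (k * p x + k ^ 2 * q x) : ℝ) : ℂ), by fun_prop⟩

theorem far (p q : C(X, ℝ)) (l : C(X, ℂ) →L[ℂ] ℂ) (hl : ∀ k, l (expo p q k) = 0)
    (η : ℝ) (hη : ∀ x, p x < η) (τ : ℝ) : l (FK p q η τ) = 0 := by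
  obtain ⟨d, hd, hpd⟩ : ∃ d > 0, ∀ x, d ≤ η - p x := by
    rcases isEmpty_or_nonempty X with h | h
    · exact ⟨1, one_pos, fun x => h.elim x⟩
    · obtain ⟨x0, _, hm⟩ := isCompact_univ.exists_isMaxOn univ_nonempty p.continuous.continuousOn
      exact ⟨η - p x0, sub_pos.2 (hη x0), fun x => sub_le_sub_left (hm (mem_univ x)) _⟩
  obtain ⟨Q, hQ⟩ : ∃ Q, ∀ x, q x ≤ Q := ⟨‖q‖, fun x => (le_abs_self _).trans (q.norm_coe_le_norm x)⟩
  have hre : ∀ x, d ^ 2 ≤ (((p x : ℂ) - (η : ℂ)) ^ 2).re := by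
    intro x
    have : ((p x : ℂ) - (η : ℂ)) ^ 2 = (((η - p x) ^ 2 : ℝ) : ℂ) := by push_cast; ring
    rw [this, Complex.ofReal_re]
    have := hpd x
    gcongr
  have hg : ∀ τ, Good p q η τ := fun τ x _ => lt_of_lt_of_le (by positivity) (hre x)
  have cF : Continuous fun τ => FK p q η τ :=
    FK_continuous p q (fun _ => (η : ℂ)) (fun τ => τ) continuous_const continuous_id hg
  set B : ℝ := max 1 (4 / d ^ 2) with hB
  have hFB : ∀ τ, ‖FK p q η τ‖ ≤ B := by
    intro τ
    rw [ContinuousMap.norm_le _ (by positivity)]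
    intro x
    rw [FK_apply p q _ _ (hg τ)]
    rcases le_total (q x - τ) 1 with h | h
    · refine (EC_bound _ _ (d ^ 2) (by positivity) (hre x)).trans ?_
      refine le_trans ?_ (le_max_right _ _)
      have : √(q x - τ) ≤ 1 := Real.sqrt_le_one.2 h
      gcongr
      linarith
    · refine le_trans ?_ (le_max_left _ _)
      rw [EC_norm]
      have h1 : 1 ≤ √(q x - τ) := Real.one_le_sqrt.2 h
      rw [div_le_one (by linarith)]
      refine le_trans (Real.exp_le_one_iff.2 ?_) h1
      rw [neg_div]
      have := hre x
      have : 0 ≤ (((p x : ℂ) - (η : ℂ)) ^ 2).re := le_trans (by positivity) this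
      have : 0 ≤ (((p x : ℂ) - (η : ℂ)) ^ 2).re / (4 * (q x - τ)) := by positivity
      linarith
  have hF0 : ∀ τ, Q ≤ τ → FK p q η τ = 0 := by
    intro τ h
    ext x
    rw [FK_apply p q _ _ (hg τ), EC_nonpos _ _ (by linarith [hQ x])]
    rfl
  refine lap_uniqC (fun τ => l (FK p q η τ)) (l.continuous.comp cF) (‖l‖ * B)
    (fun τ => (l.le_opNorm _).trans (by gcongr; exact hFB τ)) Q (fun τ h => by simp [hF0 τ h]) ?_ τ
  intro n
  have hi := int_exp_bdd (fun τ => FK p q η τ) cF B hFB Q hF0 ((n : ℝ) + 2) (by positivity)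
  set k := √((n : ℝ) + 2) with hk
  have hkp : 0 < k := by positivity
  have hk2 : k ^ 2 = (n : ℝ) + 2 := Real.sq_sqrt (by positivity)
  obtain ⟨A, hA⟩ := lapl k hkp
  have e1 : ∫ τ, Real.exp (((n : ℝ) + 2) * τ) • FK p q η τ = ((A * Real.exp (-k * η) : ℝ) : ℂ) • expo p q k := by
    ext x
    have := ((ContinuousMap.evalCLM ℂ x : C(X, ℂ) →L[ℂ] ℂ)).integral_comp_comm hi
    rw [← ContinuousMap.evalCLM_apply (M := ℂ) ℂ x, ← this]
    have e2 : ∀ τ, (ContinuousMap.evalCLM ℂ x : C(X, ℂ) →L[ℂ] ℂ) (Real.exp (((n : ℝ) + 2) * τ) • FK p q η τ)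
        = ((Real.exp (k ^ 2 * τ) * ER (η - p x) (q x - τ) : ℝ) : ℂ) := by
      intro τ
      rw [ContinuousMap.evalCLM_apply, ContinuousMap.smul_apply, FK_apply p q _ _ (hg τ), hk2]
      have : EC ((p x : ℂ) - η) (q x - τ) = ER (η - p x) (q x - τ) := by
        rw [← EC_ofReal, EC, EC]; push_cast; congr 3; ring
      rw [this, Complex.real_smul]; push_cast; rfl
    simp_rw [e2]
    rw [integral_complex_ofReal, hA _ (sub_pos.2 (hη x))]
    simp only [expo, ContinuousMap.smul_apply, ContinuousMap.coe_mk, smul_eq_mul]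
    rw [← Complex.ofReal_mul, mul_assoc, ← Real.exp_add]
    congr 3; ring
  have e3 := l.integral_comp_comm hi
  rw [e1, map_smul, hl, smul_zero] at e3
  rw [← e3]
  congr 1
  ext τ
  rw [← Complex.coe_smul, ← Complex.coe_smul, map_smul]

theorem near (p q : C(X, ℝ)) (l : C(X, ℂ) →L[ℂ] ℂ) (hl : ∀ k, l (expo p q k) = 0)
    (η τ : ℝ) (hη : ∀ x, q x = τ → p x < η) : l (FK p q η τ) = 0 := by
  obtain ⟨a, ha, hpa⟩ : ∃ a < η, ∀ x, q x = τ → p x ≤ a := by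
    have hc : IsCompact {x | q x = τ} := (isClosed_eq q.continuous continuous_const).isCompact
    rcases Set.eq_empty_or_nonempty {x | q x = τ} with h | h
    · refine ⟨η - 1, by linarith, fun x hx => ?_⟩
      have : x ∈ {x | q x = τ} := hx
      rw [h] at this; exact this.elim
    · obtain ⟨x0, hx0, hm⟩ := hc.exists_isMaxOn h p.continuous.continuousOn
      exact ⟨p x0, hη x0 hx0, fun x hx => hm hx⟩
  set Ω : Set ℂ := {z | a + |z.im| < z.re} with hΩ
  have oΩ : IsOpen Ω := isOpen_lt (by fun_prop) (by fun_prop)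
  have cΩ : Convex ℝ Ω := by
    intro z hz w hw s t hs ht hst
    simp only [hΩ, mem_ofPred_eq, Complex.add_im, Complex.add_re, Complex.smul_re, Complex.smul_im, smul_eq_mul] at *
    have h1 : |s * z.im + t * w.im| ≤ s * |z.im| + t * |w.im| := by
      refine (abs_add_le _ _).trans ?_
      rw [abs_mul, abs_mul, abs_of_nonneg hs, abs_of_nonneg ht]
    rcases eq_or_lt_of_le hs with h | h
    · subst h
      have : t = 1 := by linarith
      subst this; simp at *; linarith
    · have h2 : s * (a + |z.im|) < s * z.re := by gcongr
      have h3 : t * (a + |w.im|) ≤ t * w.re := by gcongr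
      have : a = s * a + t * a := by rw [← add_mul, hst, one_mul]
      nlinarith
  have hg : ∀ z ∈ Ω, Good p q z τ := by
    intro z hz x hx
    have h1 := hpa x hx
    have h2 : a + |z.im| < z.re := hz
    have : (((p x : ℂ) - z) ^ 2).re = (p x - z.re) ^ 2 - z.im ^ 2 := by
      simp [pow_two]
    rw [this, sub_pos]
    apply sq_lt_sq.2
    rw [abs_of_neg (show p x - z.re < 0 by linarith [abs_nonneg z.im])]
    linarith
  have dF : DifferentiableOn ℂ (fun z => FK p q z τ) Ω := by
    apply hol _ _ oΩ
    · rw [continuousOn_iff_continuous_domRestrict]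
      exact FK_continuous (Y := Ω) p q (fun z => z) (fun _ => τ) continuous_subtype_val continuous_const
        (fun z => hg z z.2)
    · intro x
      have : Differentiable ℂ fun z : ℂ => EC ((p x : ℂ) - z) (q x - τ) :=
        (EC_diff (q x - τ)).comp (by fun_prop)
      exact this.differentiableOn.congr fun z hz => FK_apply p q _ _ (hg z hz) x
  have dl : DifferentiableOn ℂ (fun z => l (FK p q z τ)) Ω := l.differentiable.comp_differentiableOn dF
  have an := dl.analyticOnNhd oΩ
  -- far point
  set R : ℝ := max (a + 1) (‖p‖ + 1) with hR
  have hRΩ : ((R : ℝ) : ℂ) ∈ Ω := by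
    simp only [hΩ, mem_ofPred_eq, Complex.ofReal_im, Complex.ofReal_re, abs_zero, add_zero]
    exact lt_of_lt_of_le (by linarith) (le_max_left _ _)
  have hηΩ : ((η : ℝ) : ℂ) ∈ Ω := by
    simpa [hΩ] using ha
  have hfar : ∀ r : ℝ, R < r → l (FK p q r τ) = 0 := by
    intro r hr
    apply far p q l hl
    intro x
    have h1 := (le_abs_self _).trans (p.norm_coe_le_norm x)
    have h2 : ‖p‖ + 1 ≤ R := le_max_right _ _
    linarith
  have hfreq : ∃ᶠ z in 𝓝[≠] ((R : ℝ) : ℂ), l (FK p q z τ) = 0 := by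
    have ht : Tendsto (fun r : ℝ => (r : ℂ)) (𝓝[>] R) (𝓝[≠] ((R : ℝ) : ℂ)) := by
      refine tendsto_nhdsWithin_iff.2 ⟨?_, ?_⟩
      · exact (Complex.continuous_ofReal.tendsto R).mono_left nhdsWithin_le_nhds
      · filter_upwards [self_mem_nhdsWithin] with r hr
        simpa using (ne_of_gt hr)
    refine ht.frequently (Eventually.frequently ?_)
    filter_upwards [self_mem_nhdsWithin] with r hr using hfar r hr
  exact an.eqOn_zero_of_preconnected_of_frequently_eq_zero cΩ.isPreconnected hRΩ hfreq hηΩ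

theorem near_left (p q : C(X, ℝ)) (l : C(X, ℂ) →L[ℂ] ℂ) (hl : ∀ k, l (expo p q k) = 0)
    (η τ : ℝ) (hη : ∀ x, q x = τ → η < p x) : l (FK p q η τ) = 0 := by
  have h := near (-p) q l (fun k => by
    have : expo (-p) q k = expo p q (-k) := by ext x; simp [expo]
    rw [this, hl]) (-η) τ (fun x hx => by simpa using hη x hx)
  have e : FK (-p) q ((-η : ℝ) : ℂ) τ = FK p q η τ := by
    have : (fun x => EC (((-p) x : ℝ) - ((-η : ℝ) : ℂ)) (q x - τ)) = fun x => EC ((p x : ℂ) - η) (q x - τ) := by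
      ext x
      simp only [EC, ContinuousMap.neg_apply]
      push_cast
      congr 3; ring
    rw [FK, FK, this]
  rwa [e] at h
end

section
variable {X : Type*} [TopologicalSpace X] [CompactSpace X]

noncomputable def heatC (p q : C(X, ℝ)) (n : ℕ) : C(X, ℂ) :=
  ⟨fun x => ((heatPoly n (p x) (q x) : ℝ) : ℂ), by unfold heatPoly; fun_prop⟩

def sigE : (Σ n : ℕ, Fin (n / 2 + 1)) → ℕ × ℕ := fun a => (a.1 - 2 * a.2, a.2)

theorem sigE_bij : Function.Bijective sigE := by
  constructor
  · rintro ⟨n, i, hi⟩ ⟨m, j, hj⟩ h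
    simp only [sigE, Prod.mk.injEq] at h
    obtain ⟨h1, h2⟩ := h
    subst h2
    have : n = m := by omega
    subst this
    rfl
  · rintro ⟨i, j⟩
    exact ⟨⟨i + 2 * j, ⟨j, by omega⟩⟩, by simp [sigE]⟩

noncomputable def mono2 (p q : C(X, ℝ)) (k : ℝ) (a : ℕ × ℕ) : C(X, ℂ) :=
  ⟨fun x => (((k * p x) ^ a.1 / a.1.factorial * ((k ^ 2 * q x) ^ a.2 / a.2.factorial) : ℝ) : ℂ), by fun_prop⟩

theorem mono2_summable (p q : C(X, ℝ)) (k : ℝ) : Summable (mono2 p q k) := by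
  have h : Summable fun a : ℕ × ℕ => (|k| * ‖p‖) ^ a.1 / a.1.factorial * ((k ^ 2 * ‖q‖) ^ a.2 / a.2.factorial) :=
    (Real.summable_pow_div_factorial (|k| * ‖p‖)).mul_of_nonneg
      (Real.summable_pow_div_factorial (k ^ 2 * ‖q‖)) (fun n => by positivity) (fun n => by positivity)
  refine Summable.of_norm_bounded h ?_
  intro a
  rw [ContinuousMap.norm_le _ (by positivity)]
  intro x
  simp only [mono2, ContinuousMap.coe_mk, Complex.norm_real, Real.norm_eq_abs, abs_mul, abs_div, abs_pow, Nat.abs_cast, sq_abs]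
  have h1 : |p x| ≤ ‖p‖ := p.norm_coe_le_norm x
  have h2 : |q x| ≤ ‖q‖ := q.norm_coe_le_norm x
  gcongr

theorem mono2_tsum (p q : C(X, ℝ)) (k : ℝ) : ∑' a, mono2 p q k a = expo p q k := by
  ext x
  rw [← ContinuousMap.tsum_apply (mono2_summable p q k)]
  simp only [mono2, expo, ContinuousMap.coe_mk]
  rw [← Complex.ofReal_tsum, Real.exp_add]
  congr 1
  have e : ∀ y : ℝ, Real.exp y = ∑' n : ℕ, y ^ n / n.factorial := fun y => by
    rw [Real.exp_eq_exp_ℝ, NormedSpace.exp_eq_tsum_div]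
  rw [e, e, tsum_mul_tsum_of_summable_norm]
  · exact (Real.summable_pow_div_factorial _).norm
  · exact (Real.summable_pow_div_factorial _).norm

theorem kills_expo (p q : C(X, ℝ)) (l : C(X, ℂ) →L[ℂ] ℂ) (hl : ∀ n, l (heatC p q n) = 0) (k : ℝ) :
    l (expo p q k) = 0 := by
  rw [← mono2_tsum]
  have hs := mono2_summable p q k
  rw [← (Equiv.ofBijective sigE sigE_bij).tsum_eq (mono2 p q k)]
  have hs' := (Equiv.ofBijective sigE sigE_bij).summable_iff.2 hs
  have := hs'.tsum_sigma (f := fun a => mono2 p q k ((Equiv.ofBijective sigE sigE_bij) a))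
  rw [this]
  have hz : ∀ n : ℕ, (∑' c : Fin (n / 2 + 1), mono2 p q k ((Equiv.ofBijective sigE sigE_bij) ⟨n, c⟩))
      = ((k ^ n / n.factorial : ℝ) : ℂ) • heatC p q n := by
    intro n
    rw [tsum_fintype]
    ext x
    rw [ContinuousMap.sum_apply, ContinuousMap.smul_apply, smul_eq_mul]
    simp only [mono2, heatC, ContinuousMap.coe_mk, Equiv.ofBijective_apply, sigE]
    rw [← Complex.ofReal_sum, ← Complex.ofReal_mul]
    congr 1
    rw [heatPoly, Finset.mul_sum, Finset.sum_range]
    apply Finset.sum_congr rfl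
    rintro ⟨j, hj⟩ -
    simp only
    have hk : k ^ n = k ^ (n - 2 * j) * (k ^ 2) ^ j := by
      rw [← pow_mul, ← pow_add]; congr 1; omega
    rw [hk]
    have := Nat.factorial_ne_zero n
    field_simp
    rw [mul_pow, mul_pow]; ring
  simp_rw [hz]
  have hsum : Summable fun n : ℕ => ((k ^ n / n.factorial : ℝ) : ℂ) • heatC p q n := by
    have := hs'.sigma
    simpa only [Function.comp_def, hz] using this
  rw [l.map_tsum hsum]
  simp [hl]
end

theorem hb_sub {E : Type*} [NormedAddCommGroup E] [NormedSpace ℂ E] (S : Submodule ℂ E) (W : E)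
    (h : ∀ l : E →L[ℂ] ℂ, (∀ a ∈ S, l a = 0) → l W = 0) : W ∈ closure (S : Set E) := by
  by_contra hW
  let _ : NormedSpace ℝ E := NormedSpace.restrictScalars ℝ ℂ E
  have hc : Convex ℝ (closure (S : Set E)) := by
    have : Convex ℝ (S : Set E) := (S.restrictScalars ℝ).convex
    exact this.closure
  obtain ⟨f, v, h1, h2⟩ := RCLike.geometric_hahn_banach_closed_point (𝕜 := ℂ) hc isClosed_closure hW
  have h0 : 0 < v := by simpa using h1 0 (subset_closure S.zero_mem)
  have hf : ∀ a ∈ S, f a = 0 := by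
    intro a ha
    by_contra hne
    have := h1 (((v : ℂ) / f a) • a) (subset_closure (S.smul_mem _ ha))
    rw [map_smul, smul_eq_mul, div_mul_cancel₀ _ hne] at this
    simp at this
  have := h f hf
  rw [this] at h2
  simp at h2
  linarith

section
variable (K : Set (ℝ × ℝ))

noncomputable def pK : C(K, ℝ) := ⟨fun z => z.1.1, by fun_prop⟩
noncomputable def qK : C(K, ℝ) := ⟨fun z => z.1.2, by fun_prop⟩

theorem good_K (z : ℝ × ℝ) (hz : z ∉ K) : Good (pK K) (qK K) (z.1 : ℂ) z.2 := by
  rintro ⟨⟨x, t⟩, hx⟩ h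
  simp only [pK, qK, ContinuousMap.coe_mk] at *
  rw [← Complex.ofReal_sub, ← Complex.ofReal_pow, Complex.ofReal_re]
  have : x - z.1 ≠ 0 := by
    intro h0
    apply hz
    have : z = (x, t) := by ext <;> simp <;> linarith
    rwa [this]
  positivity

theorem main_abs (hK : IsCompact K)
    (hsl : ∀ z ∉ K, (∀ y ∈ K, y.2 = z.2 → y.1 < z.1) ∨ (∀ y ∈ K, y.2 = z.2 → z.1 < y.1))
    (w wx wxx wt : ℝ × ℝ → ℝ) (cw : Continuous w) (cx : Continuous wx) (cxx : Continuous wxx)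
    (ct : Continuous wt) (sw : HasCompactSupport w) (sx : HasCompactSupport wx)
    (sxx : HasCompactSupport wxx) (st : HasCompactSupport wt)
    (hx : ∀ z, HasDerivAt (fun y => w (y, z.2)) (wx z) z.1)
    (hxx : ∀ z, HasDerivAt (fun y => wx (y, z.2)) (wxx z) z.1)
    (ht : ∀ z, HasDerivAt (fun y => w (z.1, y)) (wt z) z.2)
    (U : Set (ℝ × ℝ)) (oU : IsOpen U) (KU : K ⊆ U) (hU : ∀ z ∈ U, wt z - wxx z = 0)
    (ε : ℝ) (hε : 0 < ε) :
    ∃ (N : ℕ) (a : ℕ → ℝ), ∀ z ∈ K,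
      |w z - ∑ n ∈ Finset.range (N + 1), a n * heatPoly n z.1 z.2| < ε := by
  have : CompactSpace K := isCompact_iff_compactSpace.1 hK
  set p := pK K with hp
  set q := qK K with hq
  set Φ : ℝ × ℝ → C(K, ℂ) := fun z => ((wt z - wxx z : ℝ) : ℂ) • FK p q (z.1 : ℂ) z.2 with hΦ
  have cΦ : Continuous Φ := by
    rw [continuous_iff_continuousAt]
    intro z
    by_cases hz : z ∈ K
    · have : Φ =ᶠ[𝓝 z] fun _ => 0 := by
        filter_upwards [oU.mem_nhds (KU hz)] with y hy
        simp only [hΦ]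
        rw [hU y hy]
        simp
      exact continuousAt_const.congr this.symm
    · have h1 : ContinuousOn (fun z : ℝ × ℝ => FK p q (z.1 : ℂ) z.2) Kᶜ := by
        rw [continuousOn_iff_continuous_domRestrict]
        exact FK_continuous (Y := (Kᶜ : Set (ℝ × ℝ))) p q (fun z => (z.1.1 : ℂ)) (fun z => z.1.2)
          (by fun_prop) (by fun_prop) (fun z => good_K K z.1 z.2)
      have h2 := h1.continuousAt (hK.isClosed.isOpen_compl.mem_nhds hz)
      have h3 : Continuous fun z => ((wt z - wxx z : ℝ) : ℂ) :=
        Complex.continuous_ofReal.comp (ct.sub cxx)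
      exact h3.continuousAt.smul h2
  have sΦ : HasCompactSupport Φ := by
    have h1 : HasCompactSupport fun z => wt z - wxx z := st.sub sxx
    refine h1.mono ?_
    intro z hz
    simp only [Function.mem_support] at *
    intro h0
    apply hz
    simp only [hΦ, h0]
    simp
  have iΦ : Integrable Φ := cΦ.integrable_of_hasCompactSupport sΦ
  have evΦ : ∀ (x : K) z, (ContinuousMap.evalCLM ℂ x : C(K, ℂ) →L[ℂ] ℂ) (Φ z)
      = ((ER (x.1.1 - z.1) (x.1.2 - z.2) * (wt z - wxx z) : ℝ) : ℂ) := by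
    intro x z
    rw [ContinuousMap.evalCLM_apply]
    simp only [hΦ]
    rw [ContinuousMap.smul_apply, smul_eq_mul]
    by_cases hz : z ∈ K
    · rw [hU z (KU hz)]; simp
    · rw [FK_apply p q _ _ (good_K K z hz)]
      have := EC_ofReal (x.1.1 - z.1) (x.1.2 - z.2)
      simp only [hp, hq, pK, qK, ContinuousMap.coe_mk]
      rw [← Complex.ofReal_sub, this, ← Complex.ofReal_mul, mul_comm]
  set W : C(K, ℂ) := ⟨fun x => ((w x.1 : ℝ) : ℂ), by fun_prop⟩ with hW
  have hint : ∫ z, Φ z = ((√(4 * π) : ℝ) : ℂ) • W := by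
    ext x
    have h1 := ((ContinuousMap.evalCLM ℂ x : C(K, ℂ) →L[ℂ] ℂ)).integral_comp_comm iΦ
    have h2 := ((ContinuousMap.evalCLM ℂ x : C(K, ℂ) →L[ℂ] ℂ)).integrable_comp iΦ
    rw [← ContinuousMap.evalCLM_apply (M := ℂ) ℂ x, ← h1]
    simp_rw [evΦ] at h2 ⊢
    have h3 : Integrable fun z : ℝ × ℝ => ER (x.1.1 - z.1) (x.1.2 - z.2) * (wt z - wxx z) := by
      have := h2.re
      simpa using this
    rw [integral_complex_ofReal, rep w wx wxx wt cw cx cxx ct sw sx sxx st hx hxx ht _ _ h3]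
    simp [hW]
  have hcl : W ∈ closure ((Submodule.span ℂ (range (heatC p q)) : Submodule ℂ C(K, ℂ)) : Set C(K, ℂ)) := by
    apply hb_sub
    intro l hl
    have hl1 : ∀ n, l (heatC p q n) = 0 := fun n => hl _ (Submodule.subset_span ⟨n, rfl⟩)
    have hl2 := kills_expo p q l hl1
    have h1 := l.integral_comp_comm iΦ
    rw [hint, map_smul] at h1
    have h2 : ∀ z, l (Φ z) = 0 := by
      intro z
      simp only [hΦ]
      rw [map_smul]
      by_cases hz : z ∈ K
      · rw [hU z (KU hz)]; simp
      · have : l (FK p q (z.1 : ℂ) z.2) = 0 := by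
          rcases hsl z hz with h | h
          · exact near p q l hl2 z.1 z.2 (fun x hx => h x.1 x.2 hx)
          · exact near_left p q l hl2 z.1 z.2 (fun x hx => h x.1 x.2 hx)
        rw [this, smul_zero]
    simp only [h2, integral_zero] at h1
    rcases smul_eq_zero.1 h1.symm with h | h
    · exfalso
      have : 0 < √(4 * π) := by positivity
      exact this.ne' (by exact_mod_cast h)
    · exact h
  obtain ⟨V, hV, hd⟩ := Metric.mem_closure_iff.1 hcl ε hε
  obtain ⟨c, hc⟩ := Finsupp.mem_span_range_iff_exists_finsupp.1 hV
  refine ⟨c.support.sup id, fun n => (c n).re, fun z hz => ?_⟩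
  have hsub : c.support ⊆ Finset.range (c.support.sup id + 1) := by
    intro n hn
    rw [Finset.mem_range]
    exact Nat.lt_succ_of_le (Finset.le_sup (f := id) hn)
  rw [Finsupp.sum_of_support_subset c hsub _ (by simp)] at hc
  have h1 : ‖W ⟨z, hz⟩ - V ⟨z, hz⟩‖ < ε := by
    rw [dist_eq_norm] at hd
    exact lt_of_le_of_lt ((W - V).norm_coe_le_norm ⟨z, hz⟩) hd
  refine lt_of_le_of_lt ?_ h1
  refine le_trans (le_of_eq ?_) (Complex.abs_re_le_norm _)
  congr 1
  rw [← hc, ContinuousMap.sum_apply]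
  simp [hW, heatC, hp, hq, pK, qK]
end

theorem exists_phi (K M : Set (ℝ × ℝ)) (hK : IsClosed K) (hM : K ⊆ interior M) :
    ∃ φ : ℝ × ℝ → ℝ, ContDiff ℝ 3 φ ∧ (∀ᶠ x in 𝓝ˢ K, φ x = 1) ∧ (∀ x ∉ M, φ x = 0) := by
  obtain ⟨f, h1, h2, -⟩ := exists_contMDiffMap_one_nhds_of_subset_interior (n := 3)
    (modelWithCornersSelf ℝ (ℝ × ℝ)) hK hM
  exact ⟨f, f.contMDiff.contDiff, h1, h2⟩

theorem hd1 (φ : ℝ × ℝ → ℝ) (h : Differentiable ℝ φ) (z : ℝ × ℝ) :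
    HasDerivAt (fun y => φ (y, z.2)) (fderiv ℝ φ z (1, 0)) z.1 := by
  have h1 : HasFDerivAt φ (fderiv ℝ φ z) (z.1, z.2) := (h z).hasFDerivAt
  have h2 : HasDerivAt (fun y : ℝ => (y, z.2)) (1, 0) z.1 := (hasDerivAt_id z.1).prodMk (hasDerivAt_const _ _)
  exact h1.comp_hasDerivAt z.1 h2

theorem hd2 (φ : ℝ × ℝ → ℝ) (h : Differentiable ℝ φ) (z : ℝ × ℝ) :
    HasDerivAt (fun y => φ (z.1, y)) (fderiv ℝ φ z (0, 1)) z.2 := by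
  have h1 : HasFDerivAt φ (fderiv ℝ φ z) (z.1, z.2) := (h z).hasFDerivAt
  have h2 : HasDerivAt (fun y : ℝ => (z.1, y)) (0, 1) z.2 := (hasDerivAt_const _ _).prodMk (hasDerivAt_id z.2)
  exact h1.comp_hasDerivAt z.2 h2

theorem fd_loc (φ : ℝ × ℝ → ℝ) (c : ℝ) (V : Set (ℝ × ℝ)) (hV : IsOpen V) (h : ∀ z ∈ V, φ z = c)
    (v : ℝ × ℝ) : ∀ z ∈ V, fderiv ℝ φ z v = 0 := by
  intro z hz
  have : φ =ᶠ[𝓝 z] fun _ => c := by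
    filter_upwards [hV.mem_nhds hz] with y hy using h y hy
  rw [this.fderiv_eq]; simp

theorem cont_lem (D M : Set (ℝ × ℝ)) (oD : IsOpen D) (hM : IsClosed M) (hMD : M ⊆ D) (f : ℝ × ℝ → ℝ)
    (hf : ContinuousOn f D) (h0 : ∀ z ∉ M, f z = 0) : Continuous f := by
  rw [continuous_iff_continuousAt]
  intro z
  by_cases hz : z ∈ D
  · exact hf.continuousAt (oD.mem_nhds hz)
  · have : f =ᶠ[𝓝 z] fun _ => 0 := by
      filter_upwards [hM.isOpen_compl.mem_nhds (fun h => hz (hMD h))] with y hy using h0 y hy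
    exact continuousAt_const.congr this.symm

theorem der_lem1 (D M : Set (ℝ × ℝ)) (hM : IsClosed M) (hMD : M ⊆ D) (f g : ℝ × ℝ → ℝ)
    (hf : ∀ z ∈ D, HasDerivAt (fun y => f (y, z.2)) (g z) z.1) (h0 : ∀ z ∉ M, f z = 0)
    (g0 : ∀ z ∉ M, g z = 0) (z : ℝ × ℝ) : HasDerivAt (fun y => f (y, z.2)) (g z) z.1 := by
  by_cases hz : z ∈ D
  · exact hf z hz
  · have hzM : z ∉ M := fun h => hz (hMD h)
    have hc : Continuous fun y : ℝ => (y, z.2) := by fun_prop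
    have : (fun y => f (y, z.2)) =ᶠ[𝓝 z.1] fun _ => 0 := by
      filter_upwards [(hM.isOpen_compl.preimage hc).mem_nhds (show (z.1, z.2) ∈ Mᶜ from hzM)] with y hy
        using h0 _ hy
    rw [g0 z hzM]
    exact (hasDerivAt_const _ _).congr_of_eventuallyEq this

theorem der_lem2 (D M : Set (ℝ × ℝ)) (hM : IsClosed M) (hMD : M ⊆ D) (f g : ℝ × ℝ → ℝ)
    (hf : ∀ z ∈ D, HasDerivAt (fun y => f (z.1, y)) (g z) z.2) (h0 : ∀ z ∉ M, f z = 0)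
    (g0 : ∀ z ∉ M, g z = 0) (z : ℝ × ℝ) : HasDerivAt (fun y => f (z.1, y)) (g z) z.2 := by
  by_cases hz : z ∈ D
  · exact hf z hz
  · have hzM : z ∉ M := fun h => hz (hMD h)
    have hc : Continuous fun y : ℝ => (z.1, y) := by fun_prop
    have : (fun y => f (z.1, y)) =ᶠ[𝓝 z.2] fun _ => 0 := by
      filter_upwards [(hM.isOpen_compl.preimage hc).mem_nhds (show (z.1, z.2) ∈ Mᶜ from hzM)] with y hy
        using h0 _ hy
    rw [g0 z hzM]
    exact (hasDerivAt_const _ _).congr_of_eventuallyEq this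

theorem u_cont (D : Set (ℝ × ℝ)) (oD : IsOpen D) (u ux ut : ℝ × ℝ → ℝ)
    (hx : ∀ z ∈ D, HasDerivAt (fun y => u (y, z.2)) (ux z) z.1)
    (ht : ∀ z ∈ D, HasDerivAt (fun y => u (z.1, y)) (ut z) z.2)
    (cx : ContinuousOn ux D) (ct : ContinuousOn ut D) : ContinuousOn u D := by
  intro z hz
  have hn := oD.mem_nhds hz
  have := hasStrictFDerivAt_uncurry_coprod (𝕜 := ℝ) (u := z) (f := fun a b => u (a, b))
    (f₁ := fun a b => ContinuousLinearMap.toSpanSingleton ℝ (ux (a, b)))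
    (f₂ := fun a b => ContinuousLinearMap.toSpanSingleton ℝ (ut (a, b)))
    (by filter_upwards [hn] with v hv using (hx v hv).hasFDerivAt)
    (by filter_upwards [hn] with v hv using (ht v hv).hasFDerivAt)
    (by
      have h := (ContinuousLinearMap.toSpanSingletonCLE (𝕜 := ℝ) (E := ℝ)).continuous.continuousAt.comp (cx.continuousAt hn)
      exact h)
    (by
      have h := (ContinuousLinearMap.toSpanSingletonCLE (𝕜 := ℝ) (E := ℝ)).continuous.continuousAt.comp (ct.continuousAt hn)
      exact h)
  exact this.continuousAt.continuousWithinAt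

theorem main_loc (D : Set (ℝ × ℝ)) (oD : IsOpen D) (u ux uxx : ℝ × ℝ → ℝ)
    (hx : ∀ z ∈ D, HasDerivAt (fun y => u (y, z.2)) (ux z) z.1)
    (hxx : ∀ z ∈ D, HasDerivAt (fun y => ux (y, z.2)) (uxx z) z.1)
    (ht : ∀ z ∈ D, HasDerivAt (fun y => u (z.1, y)) (uxx z) z.2)
    (cx : ContinuousOn ux D) (cxx : ContinuousOn uxx D)
    (K : Set (ℝ × ℝ)) (hK : IsCompact K) (hKD : K ⊆ D)
    (hsl : ∀ z ∉ K, (∀ y ∈ K, y.2 = z.2 → y.1 < z.1) ∨ (∀ y ∈ K, y.2 = z.2 → z.1 < y.1))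
    (ε : ℝ) (hε : 0 < ε) :
    ∃ (N : ℕ) (a : ℕ → ℝ), ∀ z ∈ K,
      |u z - ∑ n ∈ Finset.range (N + 1), a n * heatPoly n z.1 z.2| < ε := by
  have cu := u_cont D oD u ux uxx hx ht cx cxx
  obtain ⟨M, hM, hKM, hMD⟩ := exists_compact_between hK oD hKD
  have clM := hM.isClosed
  obtain ⟨φ, sφ, h1, h0⟩ := exists_phi K M hK.isClosed hKM
  obtain ⟨U, oU, KU, hU⟩ := eventually_nhdsSet_iff_exists.1 h1
  set φx : ℝ × ℝ → ℝ := fun z => fderiv ℝ φ z (1, 0) with hφx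
  set φt : ℝ × ℝ → ℝ := fun z => fderiv ℝ φ z (0, 1) with hφt
  set φxx : ℝ × ℝ → ℝ := fun z => fderiv ℝ φx z (1, 0) with hφxx
  have sφx : ContDiff ℝ 2 φx := (sφ.fderiv_right (by norm_num)).clm_apply contDiff_const
  have sφt : ContDiff ℝ 2 φt := (sφ.fderiv_right (by norm_num)).clm_apply contDiff_const
  have sφxx : ContDiff ℝ 1 φxx := (sφx.fderiv_right (by norm_num)).clm_apply contDiff_const
  have Ux := fd_loc φ 1 U oU hU (1, 0)
  have Ut := fd_loc φ 1 U oU hU (0, 1)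
  have Uxx := fd_loc φx 0 U oU Ux (1, 0)
  have Mx := fd_loc φ 0 Mᶜ clM.isOpen_compl h0 (1, 0)
  have Mt := fd_loc φ 0 Mᶜ clM.isOpen_compl h0 (0, 1)
  have Mxx := fd_loc φx 0 Mᶜ clM.isOpen_compl Mx (1, 0)
  have M0x : ∀ z ∉ M, φx z = 0 := Mx
  have M0t : ∀ z ∉ M, φt z = 0 := Mt
  have M0xx : ∀ z ∉ M, φxx z = 0 := Mxx
  have dφ : Differentiable ℝ φ := sφ.differentiable (by norm_num)
  have dφx : Differentiable ℝ φx := sφx.differentiable (by norm_num)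
  set w : ℝ × ℝ → ℝ := fun z => φ z * u z with hw
  set wx : ℝ × ℝ → ℝ := fun z => φx z * u z + φ z * ux z with hwx
  set wxx : ℝ × ℝ → ℝ := fun z => (φxx z * u z + φx z * ux z) + (φx z * ux z + φ z * uxx z) with hwxx
  set wt : ℝ × ℝ → ℝ := fun z => φt z * u z + φ z * uxx z with hwt
  have w0 : ∀ z ∉ M, w z = 0 := fun z hz => by simp [hw, h0 z hz]
  have wx0 : ∀ z ∉ M, wx z = 0 := fun z hz => by simp [hwx, h0 z hz, M0x z hz]
  have wxx0 : ∀ z ∉ M, wxx z = 0 := fun z hz => by simp [hwxx, h0 z hz, M0x z hz, M0xx z hz]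
  have wt0 : ∀ z ∉ M, wt z = 0 := fun z hz => by simp [hwt, h0 z hz, M0t z hz]
  have c0 := sφ.continuous.continuousOn (s := D)
  have c1 := sφx.continuous.continuousOn (s := D)
  have c2 := sφxx.continuous.continuousOn (s := D)
  have c3 := sφt.continuous.continuousOn (s := D)
  obtain ⟨N, a, hNa⟩ := main_abs K hK hsl w wx wxx wt
    (cont_lem D M oD clM hMD w (c0.mul cu) w0)
    (cont_lem D M oD clM hMD wx ((c1.mul cu).add (c0.mul cx)) wx0)
    (cont_lem D M oD clM hMD wxx (((c2.mul cu).add (c1.mul cx)).add ((c1.mul cx).add (c0.mul cxx))) wxx0)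
    (cont_lem D M oD clM hMD wt ((c3.mul cu).add (c0.mul cxx)) wt0)
    (HasCompactSupport.intro hM w0) (HasCompactSupport.intro hM wx0)
    (HasCompactSupport.intro hM wxx0) (HasCompactSupport.intro hM wt0)
    (der_lem1 D M clM hMD w wx (fun z hz => (hd1 φ dφ z).mul (hx z hz)) w0 wx0)
    (der_lem1 D M clM hMD wx wxx
      (fun z hz => ((hd1 φx dφx z).mul (hx z hz)).add ((hd1 φ dφ z).mul (hxx z hz))) wx0 wxx0)
    (der_lem2 D M clM hMD w wt (fun z hz => (hd2 φ dφ z).mul (ht z hz)) w0 wt0)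
    U oU KU
    (fun z hz => by
      have e1 : φx z = 0 := Ux z hz
      have e2 : φt z = 0 := Ut z hz
      have e3 : φxx z = 0 := Uxx z hz
      simp [hwt, hwxx, e1, e2, e3])
    ε hε
  refine ⟨N, a, fun z hz => ?_⟩
  have := hNa z hz
  simpa only [hw, hU z (KU hz), one_mul] using this


end
end HeatAux

/-- The heat polynomials form a complete system of solutions of the heat equation on
the domain `D(s) = {(y,t) : 0 < y < s(t), 0 < t < T}`: any classical solution of
`u_yy = u_t` on `D(s)` can be uniformly approximated on every compact subset of `D(s)`
by finite linear combinations of heat polynomials. -/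
theorem heatPoly_complete_system
    (T L : ℝ) (hT : 0 < T) (hL : 0 < L)
    (s : ℝ → ℝ) (hs : ContDiffOn ℝ 1 s (Set.Icc 0 T)) (hs0 : s 0 = 0)
    (hsL : ∀ t ∈ Set.Ioc 0 T, 0 < s t ∧ s t ≤ L)
    (D : Set (ℝ × ℝ))
    (hD : D = {z : ℝ × ℝ | 0 < z.1 ∧ z.1 < s z.2 ∧ 0 < z.2 ∧ z.2 < T})
    (u : ℝ × ℝ → ℝ)
    (hdx : ∀ z ∈ D, DifferentiableAt ℝ (fun y => u (y, z.2)) z.1)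
    (hdxx : ∀ z ∈ D, DifferentiableAt ℝ (fun y => deriv (fun y' => u (y', z.2)) y) z.1)
    (hdt : ∀ z ∈ D, DifferentiableAt ℝ (fun t => u (z.1, t)) z.2)
    (hcx : ContinuousOn (fun z : ℝ × ℝ => deriv (fun y => u (y, z.2)) z.1) D)
    (hcxx : ContinuousOn
      (fun z : ℝ × ℝ => deriv (fun y => deriv (fun y' => u (y', z.2)) y) z.1) D)
    (hheat : ∀ z ∈ D,
      deriv (fun y => deriv (fun y' => u (y', z.2)) y) z.1
        = deriv (fun t => u (z.1, t)) z.2)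
    (K : Set (ℝ × ℝ)) (hK : IsCompact K) (hKD : K ⊆ D)
    (ε : ℝ) (hε : 0 < ε) :
    ∃ (N : ℕ) (a : ℕ → ℝ), ∀ z ∈ K,
      |u z - ∑ n ∈ Finset.range (N + 1), a n * heatPoly n z.1 z.2| < ε := by
  have hsc : Continuous (fun t : ℝ => s (max 0 (min t T))) := by
    have h1 : Continuous fun t : ℝ => max 0 (min t T) := by fun_prop
    exact hs.continuousOn.comp_continuous h1
      (fun t => ⟨le_max_left _ _, max_le hT.le (min_le_right _ _)⟩)
  have hse : ∀ t, 0 ≤ t → t ≤ T → s (max 0 (min t T)) = s t := fun t h1 h2 => by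
    rw [min_eq_left h2, max_eq_right h1]
  set r : ℝ → ℝ := fun t => s (max 0 (min t T)) with hr
  replace hse : ∀ t, 0 ≤ t → t ≤ T → r t = s t := hse
  have hD' : D = {z : ℝ × ℝ | 0 < z.1 ∧ z.1 < r z.2 ∧ 0 < z.2 ∧ z.2 < T} := by
    rw [hD]
    ext z
    constructor
    · rintro ⟨h1, h2, h3, h4⟩
      exact ⟨h1, by rw [hse _ h3.le h4.le]; exact h2, h3, h4⟩
    · rintro ⟨h1, h2, h3, h4⟩
      exact ⟨h1, by rw [hse _ h3.le h4.le] at h2; exact h2, h3, h4⟩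
  have oD : IsOpen D := by
    rw [hD']
    have o1 : IsOpen {z : ℝ × ℝ | 0 < z.1} := isOpen_lt (by fun_prop) (by fun_prop)
    have o2 : IsOpen {z : ℝ × ℝ | z.1 < r z.2} := isOpen_lt (by fun_prop) (by fun_prop)
    have o3 : IsOpen {z : ℝ × ℝ | 0 < z.2} := isOpen_lt (by fun_prop) (by fun_prop)
    have o4 : IsOpen {z : ℝ × ℝ | z.2 < T} := isOpen_lt (by fun_prop) (by fun_prop)
    exact o1.inter (o2.inter (o3.inter o4))
  have cg : Continuous fun z : ℝ × ℝ => min (min z.1 (r z.2 - z.1)) (min z.2 (T - z.2)) := by fun_prop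
  obtain ⟨δ, hδ, hKδ⟩ := hK.exists_forall_le' cg.continuousOn (a := 0) (by
    intro z hz
    have h := hKD hz
    rw [hD'] at h
    obtain ⟨h1, h2, h3, h4⟩ := h
    exact lt_min (lt_min h1 (by linarith)) (lt_min h3 (by linarith)))
  set K' : Set (ℝ × ℝ) := {z | δ ≤ z.1 ∧ z.1 ≤ r z.2 - δ ∧ δ ≤ z.2 ∧ z.2 ≤ T - δ} with hK'
  have hKK' : K ⊆ K' := by
    intro z hz
    have h := hKδ z hz
    rw [le_min_iff, le_min_iff, le_min_iff] at h
    obtain ⟨⟨h1, h2⟩, h3, h4⟩ := h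
    exact ⟨h1, by linarith, h3, by linarith⟩
  have hK'D : K' ⊆ D := by
    rintro z ⟨h1, h2, h3, h4⟩
    rw [hD']
    exact ⟨by linarith, by linarith, by linarith, by linarith⟩
  have clK' : IsClosed K' := by
    have o1 : IsClosed {z : ℝ × ℝ | δ ≤ z.1} := isClosed_le (by fun_prop) (by fun_prop)
    have o2 : IsClosed {z : ℝ × ℝ | z.1 ≤ r z.2 - δ} := isClosed_le (by fun_prop) (by fun_prop)
    have o3 : IsClosed {z : ℝ × ℝ | δ ≤ z.2} := isClosed_le (by fun_prop) (by fun_prop)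
    have o4 : IsClosed {z : ℝ × ℝ | z.2 ≤ T - δ} := isClosed_le (by fun_prop) (by fun_prop)
    exact o1.inter (o2.inter (o3.inter o4))
  have cK' : IsCompact K' := by
    refine IsCompact.of_isClosed_subset
      ((isCompact_Icc (a := (0 : ℝ)) (b := L)).prod (isCompact_Icc (a := (0 : ℝ)) (b := T))) clK' ?_
    rintro z ⟨h1, h2, h3, h4⟩
    have h5 : r z.2 = s z.2 := hse _ (by linarith) (by linarith)
    have h6 := (hsL z.2 ⟨by linarith, by linarith⟩).2
    exact ⟨⟨by linarith, by linarith⟩, ⟨by linarith, by linarith⟩⟩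
  obtain ⟨N, a, h⟩ := HeatAux.main_loc D oD u
    (fun z : ℝ × ℝ => deriv (fun y => u (y, z.2)) z.1)
    (fun z : ℝ × ℝ => deriv (fun y => deriv (fun y' => u (y', z.2)) y) z.1)
    (fun z hz => (hdx z hz).hasDerivAt)
    (fun z hz => (hdxx z hz).hasDerivAt)
    (fun z hz => by
      have h := (hdt z hz).hasDerivAt
      rw [← hheat z hz] at h
      exact h)
    hcx hcxx K' cK' hK'D
    (fun z hz => by
      by_cases h : z.1 < δ
      · exact Or.inr (fun y hy _ => lt_of_lt_of_le h hy.1)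
      · refine Or.inl (fun y hy he => ?_)
        by_contra hc
        push Not at h hc
        obtain ⟨h1, h2, h3, h4⟩ := hy
        rw [he] at h2 h3 h4
        exact hz ⟨h, hc.trans h2, h3, h4⟩)
    ε hε
  exact ⟨N, a, fun z hz => h z (hKK' hz)⟩
end

section
/- Let T > 0, let b : [0,T] → ℝ be continuous at 0 with b(0) = 0, and let u : ℝ² → ℝ be such that u and its partial derivative u_y with respect to the first variable exist near (0,0) and are continuous at (0,0). If u(b(t),t) = 1 and u_y(b(t),t) = 0 for all t ∈ (0,T], then u(0,0) + u_y(0,0) = 1. Consequently, the boundary conditions u(b(t),t) = 1, u_y(b(t),t) = 0 and u(0,t) + u_y(0,t) = 0 for t ∈ (0,T] cannot all hold for a function u with u and u_y continuous at the origin: the boundary conditions of the finite-horizon Russian option free boundary problem are inconsistent at the point (0,0). -/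
/-- Inconsistency of the boundary conditions of the finite-horizon Russian option
free boundary problem at the origin: if `u(b(t),t) = 1` and `u_y(b(t),t) = 0` on
`(0,T]`, with `b` continuous at `0`, `b(0) = 0`, and `u`, `u_y` existing near and
continuous at `(0,0)`, then `u(0,0) + u_y(0,0) = 1`; hence the reflection condition
`u(0,t) + u_y(0,t) = 0` on `(0,T]` cannot also hold. -/
theorem russian_boundary_conditions_inconsistent
    (T : ℝ) (hT : 0 < T) (b : ℝ → ℝ)
    (hb0 : b 0 = 0) (hbc : ContinuousWithinAt b (Set.Icc 0 T) 0)
    (u : ℝ → ℝ → ℝ)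
    (hu_ex : ∀ᶠ z : ℝ × ℝ in nhds (0, 0), DifferentiableAt ℝ (fun y => u y z.2) z.1)
    (huc : ContinuousAt (fun z : ℝ × ℝ => u z.1 z.2) (0, 0))
    (huyc : ContinuousAt (fun z : ℝ × ℝ => deriv (fun y => u y z.2) z.1) (0, 0))
    (hvm : ∀ t ∈ Set.Ioc 0 T, u (b t) t = 1)
    (hsf : ∀ t ∈ Set.Ioc 0 T, deriv (fun y => u y t) (b t) = 0) :
    u 0 0 + deriv (fun y => u y 0) 0 = 1
    ∧ ¬ (∀ t ∈ Set.Ioc 0 T, u 0 t + deriv (fun y => u y t) 0 = 0) := by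
  have hIoc : Set.Ioc 0 T ∈ nhdsWithin (0 : ℝ) (Set.Ioi 0) := Ioc_mem_nhdsGT hT
  have hid : Filter.Tendsto (fun t : ℝ => t) (nhdsWithin (0 : ℝ) (Set.Ioi 0)) (nhds 0) :=
    Filter.tendsto_id.mono_left nhdsWithin_le_nhds
  have hle : nhdsWithin (0 : ℝ) (Set.Ioi 0) ≤ nhdsWithin 0 (Set.Icc 0 T) :=
    nhdsWithin_le_of_mem (Filter.mem_of_superset hIoc Set.Ioc_subset_Icc_self)
  have hb : Filter.Tendsto b (nhdsWithin (0 : ℝ) (Set.Ioi 0)) (nhds 0) := by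
    have h : Filter.Tendsto b (nhdsWithin 0 (Set.Icc 0 T)) (nhds (b 0)) := hbc
    rw [hb0] at h
    exact h.mono_left hle
  have hbt : Filter.Tendsto (fun t => (b t, t)) (nhdsWithin (0 : ℝ) (Set.Ioi 0))
      (nhds ((0 : ℝ), (0 : ℝ))) := hb.prodMk_nhds hid
  have h0t : Filter.Tendsto (fun t : ℝ => ((0 : ℝ), t)) (nhdsWithin (0 : ℝ) (Set.Ioi 0))
      (nhds ((0 : ℝ), (0 : ℝ))) := tendsto_const_nhds.prodMk_nhds hid
  have hs := huc.add huyc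
  have key : u 0 0 + deriv (fun y => u y 0) 0 = 1 := by
    refine tendsto_nhds_unique (hs.tendsto.comp hbt) (tendsto_const_nhds.congr' ?_)
    filter_upwards [hIoc] with t ht
    simp [hvm t ht, hsf t ht]
  refine ⟨key, fun h => ?_⟩
  have h2 : u 0 0 + deriv (fun y => u y 0) 0 = 0 := by
    refine tendsto_nhds_unique (hs.tendsto.comp h0t) (tendsto_const_nhds.congr' ?_)
    filter_upwards [hIoc] with t ht
    simp [h t ht]
  linarith
end
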